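/- arXiv:1411.1652 — 9 statements merged into one kernel-verified Lean document; each statement's English description precedes it below -/
import Mathlib

section
/- (Main Implicit Bound) Let G be a connected simple graph on n ≥ 2 vertices with maximum degree Δ, Laplacian L and Moore–Penrose pseudoinverse B of L, and set f = max_i B_{ii}, o = max_{i≠j} |B_{ij}|. Suppose x : V → ℕ and d : V → ℤ satisfy L x = d (viewing x, d as integer vectors), x_k = 0 for some vertex k, |d_k| ≤ Δ − 1, and ∑_i |d_i| ≤ 2N for a real number N with 2N ≥ Δ − 1. Then s := ∑_i x_i satisfies s ≤ n·( f·(Δ − 1) + o·(2N − Δ + 1) ). -/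
/-!
The vector `B L x` is the projection of `x` orthogonal to the constants, so
`B d = x - s / n`. At the vertex `k` with `x k = 0` this reads `s / n = -∑ j, B k j * d j`, whence
`s / n ≤ f |d k| + o (2 N - |d k|)`. The right side is nondecreasing in `|d k| ≤ Δ - 1` because
`o ≤ f`: the pseudoinverse is positive semidefinite (`B = Bᵀ L B`), so every off-diagonal
entry satisfies `|B i j| ≤ (B i i + B j j) / 2`.
-/

open Matrix

/-- The Moore–Penrose pseudoinverse of a symmetric matrix is symmetric: its transpose satisfies
the same Penrose equations, and the usual uniqueness argument applies. -/
lemma pinv_symm {ι : Type*} [Fintype ι] {L B : Matrix ι ι ℝ} (hL : Lᵀ = L)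
    (h1 : L * B * L = L) (h2 : B * L * B = B)
    (h3 : (L * B)ᵀ = L * B) (h4 : (B * L)ᵀ = B * L) : Bᵀ = B := by
  have e3 : Bᵀ * L = L * B := by rw [← h3, transpose_mul, hL]
  have e4 : L * Bᵀ = B * L := by rw [← h4, transpose_mul, hL]
  have hcomm : L * B = B * L := by
    have a : L * B = (B * L) * (L * B) := by
      have h1' : L * Bᵀ * L = L := by
        have := congrArg transpose h1
        simpa [transpose_mul, hL, Matrix.mul_assoc] using this
      calc L * B = (L * Bᵀ * L) * B := by rw [h1']
        _ = (B * L) * (L * B) := by rw [e4, Matrix.mul_assoc]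
    have b : L * B = (L * B) * (B * L) := by
      have := congrArg transpose a
      rwa [h3, transpose_mul, h3, h4] at this
    calc L * B = (L * B) * (B * L) := b
      _ = (L * B) * (L * Bᵀ) := by rw [e4]
      _ = (L * B * L) * Bᵀ := by simp only [Matrix.mul_assoc]
      _ = B * L := by rw [h1, e4]
  have h2' : Bᵀ * L * Bᵀ = Bᵀ := by
    have := congrArg transpose h2
    simpa [transpose_mul, hL, Matrix.mul_assoc] using this
  calc Bᵀ = Bᵀ * L * Bᵀ := h2'.symm
    _ = Bᵀ * (L * Bᵀ) := Matrix.mul_assoc _ _ _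
    _ = Bᵀ * (L * B) := by rw [e4, hcomm]
    _ = (Bᵀ * L) * B := (Matrix.mul_assoc _ _ _).symm
    _ = B := by rw [e3, hcomm, h2]

lemma abs_entry_le_of_posSemidef {ι : Type*} [Fintype ι] [DecidableEq ι] {B : Matrix ι ι ℝ}
    (hB : B.PosSemidef) (i j : ι) : |B i j| ≤ (B i i + B j j) / 2 := by
  have hs : B j i = B i j := by simpa using hB.1.apply i j
  have key : ∀ c : ℝ, 0 ≤ B i i + c * B i j + (c * B i j + c * c * B j j) := by
    intro c
    have h := hB.dotProduct_mulVec_nonneg (Pi.single i 1 + Pi.single j c)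
    simp only [star_trivial, Matrix.mulVec_add, add_dotProduct, dotProduct_add,
      single_dotProduct, Matrix.mulVec_single, MulOpposite.op_one, one_smul, Pi.smul_apply,
      Matrix.col_apply, MulOpposite.smul_eq_mul_unop, MulOpposite.unop_op, hs] at h
    linarith
  rw [abs_le]
  constructor <;> linarith [key 1, key (-1)]

/-- On a connected graph, `B L` subtracts from a vector its average. -/
lemma pinv_mul_lap_mulVec {n : ℕ} (G : SimpleGraph (Fin n)) [DecidableRel G.Adj]
    (hG : G.Connected) (B : Matrix (Fin n) (Fin n) ℝ)
    (hB1 : G.lapMatrix ℝ * B * G.lapMatrix ℝ = G.lapMatrix ℝ)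
    (hB4 : (B * G.lapMatrix ℝ)ᵀ = B * G.lapMatrix ℝ) (y : Fin n → ℝ) (k : Fin n) :
    n * (B *ᵥ (G.lapMatrix ℝ *ᵥ y)) k = n * y k - ∑ i, y i := by
  set z := B *ᵥ (G.lapMatrix ℝ *ᵥ y) with hz
  have hker : G.lapMatrix ℝ *ᵥ (z - y) = 0 := by
    rw [Matrix.mulVec_sub, hz, Matrix.mulVec_mulVec, Matrix.mulVec_mulVec, hB1,
      sub_self]
  have hconst : ∀ i, z i - y i = z k - y k := fun i =>
    (SimpleGraph.lapMatrix_mulVec_eq_zero_iff_forall_reachable G).1 hker i k (hG.preconnected i k)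
  have hsum : ∑ i, z i = 0 := by
    have h : (fun _ => (1 : ℝ)) ⬝ᵥ z = 0 := by
      rw [hz, Matrix.mulVec_mulVec, Matrix.dotProduct_mulVec, ← Matrix.mulVec_transpose, hB4,
        ← Matrix.mulVec_mulVec, SimpleGraph.lapMatrix_mulVec_const_eq_zero, Matrix.mulVec_zero,
        zero_dotProduct]
    simpa [dotProduct] using h
  have h2 : ∑ i, (z i - y i) = n * (z k - y k) := by
    simp_rw [hconst]
    rw [Finset.sum_const, Finset.card_univ, Fintype.card_fin, nsmul_eq_mul]
  rw [Finset.sum_sub_distrib, hsum] at h2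
  linarith

/-- Main Implicit Bound: the duration `s = ∑ i, x i` of a terminating chip-firing
game with `N` chips on a connected graph `G` on `n ≥ 2` vertices with maximum degree `Δ`
satisfies `s ≤ n (f (Δ - 1) + o (2N - Δ + 1))`, where `f` is the largest diagonal entry
and `o` the largest absolute value of an off-diagonal entry of the Moore–Penrose
pseudoinverse `B` of the Laplacian of `G`. -/
theorem chipFiring_main_implicit_bound
    {n : ℕ} (hn : 2 ≤ n)
    (G : SimpleGraph (Fin n)) [DecidableRel G.Adj]
    (hG : G.Connected)
    (B : Matrix (Fin n) (Fin n) ℝ)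
    (hB1 : G.lapMatrix ℝ * B * G.lapMatrix ℝ = G.lapMatrix ℝ)
    (hB2 : B * G.lapMatrix ℝ * B = B)
    (hB3 : (G.lapMatrix ℝ * B)ᵀ = G.lapMatrix ℝ * B)
    (hB4 : (B * G.lapMatrix ℝ)ᵀ = B * G.lapMatrix ℝ)
    (f o : ℝ)
    (hf : IsGreatest (Set.range fun i => B i i) f)
    (ho : IsGreatest {r : ℝ | ∃ i j : Fin n, i ≠ j ∧ |B i j| = r} o)
    (x : Fin n → ℕ) (d : Fin n → ℤ)
    (hLx : G.lapMatrix ℤ *ᵥ (fun i => (x i : ℤ)) = d)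
    (k : Fin n) (hk : x k = 0)
    (hdk : |d k| ≤ (G.maxDegree : ℤ) - 1)
    (N : ℝ) (hN : (∑ i, |(d i : ℝ)|) ≤ 2 * N)
    (hNΔ : (G.maxDegree : ℝ) - 1 ≤ 2 * N) :
    ((∑ i, x i : ℕ) : ℝ) ≤
      n * (f * ((G.maxDegree : ℝ) - 1) + o * (2 * N - (G.maxDegree : ℝ) + 1)) := by
  have hsymm := pinv_symm (G.isSymm_lapMatrix (R := ℝ)) hB1 hB2 hB3 hB4
  have hpsd : B.PosSemidef := by
    have h := (SimpleGraph.posSemidef_lapMatrix ℝ G).conjTranspose_mul_mul_same B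
    rwa [conjTranspose_eq_transpose_of_trivial, hsymm, hB2] at h
  have hof : o ≤ f := by
    obtain ⟨i, j, -, hij⟩ := ho.1
    have hi : B i i ≤ f := hf.2 ⟨i, rfl⟩
    have hj : B j j ≤ f := hf.2 ⟨j, rfl⟩
    linarith [abs_entry_le_of_posSemidef hpsd i j]
  have ho0 : 0 ≤ o := by
    obtain ⟨i, j, -, hij⟩ := ho.1
    exact hij ▸ abs_nonneg _
  have hd : G.lapMatrix ℝ *ᵥ (fun i => (x i : ℝ)) = fun i => (d i : ℝ) := by
    funext i
    rw [← hLx]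
    simp [SimpleGraph.lapMatrix_mulVec_apply]
  have hmain := pinv_mul_lap_mulVec G hG B hB1 hB4 (fun i => (x i : ℝ)) k
  rw [hd] at hmain
  simp only [hk, Nat.cast_zero, mul_zero, zero_sub] at hmain
  have hdk' : |(d k : ℝ)| ≤ (G.maxDegree : ℝ) - 1 := by exact_mod_cast hdk
  have hbound : -(B *ᵥ fun i => (d i : ℝ)) k ≤
      f * |(d k : ℝ)| + o * (2 * N - |(d k : ℝ)|) := by
    have hsplit := Finset.add_sum_erase Finset.univ (fun j => |(d j : ℝ)|) (Finset.mem_univ k)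
    have hkk : |B k k| ≤ f := by
      have h1 := abs_entry_le_of_posSemidef hpsd k k
      have h2 : B k k ≤ f := hf.2 ⟨k, rfl⟩
      linarith
    calc -(B *ᵥ fun i => (d i : ℝ)) k ≤ |(B *ᵥ fun i => (d i : ℝ)) k| := neg_le_abs _
      _ ≤ ∑ j, |B k j| * |(d j : ℝ)| := by
        simp only [Matrix.mulVec, dotProduct, ← abs_mul]
        exact Finset.abs_sum_le_sum_abs _ _
      _ = |B k k| * |(d k : ℝ)| + ∑ j ∈ Finset.univ.erase k, |B k j| * |(d j : ℝ)| :=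
        (Finset.add_sum_erase Finset.univ _ (Finset.mem_univ k)).symm
      _ ≤ f * |(d k : ℝ)| + ∑ j ∈ Finset.univ.erase k, o * |(d j : ℝ)| := by
        gcongr with j hj
        exact ho.2 ⟨k, j, (Finset.ne_of_mem_erase hj).symm, rfl⟩
      _ ≤ f * |(d k : ℝ)| + o * (2 * N - |(d k : ℝ)|) := by
        rw [← Finset.mul_sum]
        gcongr
        linarith
  have hmono : f * |(d k : ℝ)| + o * (2 * N - |(d k : ℝ)|) ≤
      f * ((G.maxDegree : ℝ) - 1) + o * (2 * N - (G.maxDegree : ℝ) + 1) := by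
    nlinarith [mul_nonneg (sub_nonneg.2 hof) (sub_nonneg.2 hdk')]
  have hfin := mul_le_mul_of_nonneg_left (hbound.trans hmono) (Nat.cast_nonneg (α := ℝ) n)
  push_cast
  linarith
end

section
/- (Björner–Lovász–Shor bound) Let G be a connected simple graph on n ≥ 2 vertices with Laplacian L and algebraic connectivity λ₂ (the smallest nonzero eigenvalue of L). Suppose x : V → ℕ and d : V → ℤ satisfy L x = d, x_k = 0 for some vertex k, and ∑_i |d_i| ≤ 2N for a real number N ≥ 0. Then s := ∑_i x_i satisfies s ≤ 2·n·N/λ₂. -/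
/-!
Write `y = x - s / n` for the mean-zero part of the firing vector. Constants lie in the kernel of
the Laplacian `L`, so `L y = d`. Expanding in an orthonormal eigenbasis of `L`, the component of
`y` along an eigenvector for the eigenvalue `0` vanishes: by connectedness such an eigenvector is
constant, and `y` has mean zero. All other eigenvalues are at least `λ₂`, so
`λ₂ ‖y‖₂ ≤ ‖d‖₂` (`lapMatrix_spectral_gap`). At the vertex `k` that never fires,
`s / n = |y k| ≤ ‖y‖₂ ≤ ‖d‖₂ / λ₂ ≤ ‖d‖₁ / λ₂ ≤ 2 N / λ₂`.
-/

open Matrix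

/-- On vectors of mean zero the Laplacian of a connected graph expands squared Euclidean norms
by at least the square of any lower bound on its nonzero eigenvalues. -/
lemma lapMatrix_spectral_gap {n : ℕ} (G : SimpleGraph (Fin n)) [DecidableRel G.Adj]
    (hG : G.Connected) (lam2 : ℝ) (hpos : 0 < lam2)
    (hmin : ∀ μ : ℝ, μ ≠ 0 →
      (∃ v : Fin n → ℝ, v ≠ 0 ∧ G.lapMatrix ℝ *ᵥ v = μ • v) → lam2 ≤ μ)
    (y : Fin n → ℝ) (hy : ∑ i, y i = 0) :
    lam2 ^ 2 * ∑ i, y i ^ 2 ≤ ∑ i, (G.lapMatrix ℝ *ᵥ y) i ^ 2 := by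
  have hH : (G.lapMatrix ℝ).IsHermitian := (G.posSemidef_lapMatrix ℝ).1
  have parseval : ∀ z : Fin n → ℝ,
      ∑ i, z i ^ 2 = ∑ j, ((hH.eigenvectorBasis j).ofLp ⬝ᵥ z) ^ 2 := by
    intro z
    have h := hH.eigenvectorBasis.sum_sq_norm_inner_right (WithLp.toLp 2 z)
    rw [EuclideanSpace.norm_sq_eq] at h
    simpa [EuclideanSpace.inner_eq_star_dotProduct, dotProduct_comm] using h.symm
  rw [parseval y, parseval (G.lapMatrix ℝ *ᵥ y), Finset.mul_sum]
  refine Finset.sum_le_sum fun j _ => ?_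
  set b : Fin n → ℝ := (hH.eigenvectorBasis j).ofLp with hb
  have hbe : G.lapMatrix ℝ *ᵥ b = hH.eigenvalues j • b := hH.mulVec_eigenvectorBasis j
  have hdot : b ⬝ᵥ (G.lapMatrix ℝ *ᵥ y) = hH.eigenvalues j * (b ⬝ᵥ y) := by
    rw [dotProduct_mulVec, ← mulVec_transpose, (G.isSymm_lapMatrix (R := ℝ)).eq, hbe,
      smul_dotProduct, smul_eq_mul]
  rw [hdot]
  by_cases h0 : hH.eigenvalues j = 0
  · rw [h0, zero_smul] at hbe
    rw [G.lapMatrix_mulVec_eq_zero_iff_forall_reachable] at hbe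
    have hby : b ⬝ᵥ y = 0 := by
      obtain ⟨v⟩ := hG.nonempty
      have : ∀ i, b i = b v := fun i => hbe i v (hG.preconnected i v)
      simp only [dotProduct, this, ← Finset.mul_sum, hy, mul_zero]
    simp [hby]
  · have hb0 : b ≠ 0 := by
      intro h
      apply hH.eigenvectorBasis.orthonormal.ne_zero j
      ext i
      exact congrFun h i
    have hle := hmin _ h0 ⟨b, hb0, hbe⟩
    rw [mul_pow]
    gcongr

/-- Björner–Lovász–Shor bound: the duration `s = ∑ i, x i` of a terminating
chip-firing game with `N` chips on a connected graph `G` on `n ≥ 2` vertices satisfies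
`s ≤ 2 n N / λ₂`, where `λ₂` is the algebraic connectivity of `G` (the smallest nonzero
eigenvalue of the Laplacian). -/
theorem chipFiring_bjorner_lovasz_shor_bound
    {n : ℕ} (hn : 2 ≤ n)
    (G : SimpleGraph (Fin n)) [DecidableRel G.Adj]
    (hG : G.Connected)
    (lam2 : ℝ) (hl2pos : 0 < lam2)
    (hl2eig : ∃ v : Fin n → ℝ, v ≠ 0 ∧ G.lapMatrix ℝ *ᵥ v = lam2 • v)
    (hl2min : ∀ μ : ℝ, μ ≠ 0 →
      (∃ v : Fin n → ℝ, v ≠ 0 ∧ G.lapMatrix ℝ *ᵥ v = μ • v) → lam2 ≤ μ)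
    (x : Fin n → ℕ) (d : Fin n → ℤ)
    (hLx : G.lapMatrix ℤ *ᵥ (fun i => (x i : ℤ)) = d)
    (k : Fin n) (hk : x k = 0)
    (N : ℝ) (hN0 : 0 ≤ N) (hN : (∑ i, |(d i : ℝ)|) ≤ 2 * N) :
    ((∑ i, x i : ℕ) : ℝ) ≤ 2 * n * N / lam2 := by
  have hnpos : (0 : ℝ) < n := by exact_mod_cast (by omega : 0 < n)
  set s : ℝ := ((∑ i, x i : ℕ) : ℝ) with hs
  have hs0 : 0 ≤ s := Nat.cast_nonneg _
  have hLxR : G.lapMatrix ℝ *ᵥ (fun i => (x i : ℝ)) = fun i => (d i : ℝ) := by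
    ext i
    have h := congrArg (Int.cast : ℤ → ℝ) (congrFun hLx i)
    rw [SimpleGraph.lapMatrix_mulVec_apply] at h ⊢
    push_cast at h
    exact h
  set y : Fin n → ℝ := (fun i => (x i : ℝ)) - fun _ => s / n with hy
  have hysum : ∑ i, y i = 0 := by
    simp [hy, hs]
    field_simp
    simp
  have hLy : G.lapMatrix ℝ *ᵥ y = fun i => (d i : ℝ) := by
    have hc : G.lapMatrix ℝ *ᵥ (fun _ => s / n) = 0 := by
      rw [G.lapMatrix_mulVec_eq_zero_iff_forall_reachable]
      exact fun _ _ _ => rfl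
    rw [hy, mulVec_sub, hc, sub_zero, hLxR]
  have hgap := lapMatrix_spectral_gap G hG lam2 hl2pos hl2min y hysum
  rw [hLy] at hgap
  have hyk : (s / n) ^ 2 ≤ ∑ i, y i ^ 2 := by
    have h := Finset.single_le_sum (f := fun i => y i ^ 2) (fun i _ => sq_nonneg _)
      (Finset.mem_univ k)
    simpa [hy, hk] using h
  have hd : ∑ i, (d i : ℝ) ^ 2 ≤ (2 * N) ^ 2 := by
    calc ∑ i, (d i : ℝ) ^ 2 = ∑ i, |(d i : ℝ)| ^ 2 := by simp
      _ ≤ (∑ i, |(d i : ℝ)|) ^ 2 :=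
        Finset.sum_sq_le_sq_sum_of_nonneg fun i _ => abs_nonneg _
      _ ≤ (2 * N) ^ 2 := by gcongr
  have hfin : lam2 * (s / n) ≤ 2 * N := by
    refine le_of_sq_le_sq ?_ (by positivity)
    rw [mul_pow]
    exact (mul_le_mul_of_nonneg_left hyk (sq_nonneg _)).trans (hgap.trans hd)
  rw [le_div_iff₀ hl2pos]
  calc s * lam2 = lam2 * (s / n) * n := by field_simp
    _ ≤ 2 * N * n := by gcongr
    _ = 2 * n * N := by ring
end

section
/- Let G be a connected vertex-transitive simple graph on n ≥ 2 vertices with Laplacian L and algebraic connectivity λ₂. Suppose x : V → ℕ and d : V → ℤ satisfy L x = d, x_k = 0 for some vertex k, and ∑_i |d_i| ≤ 2N for a real number N ≥ 0. Then s := ∑_i x_i satisfies s ≤ 2·(n−1)·N/λ₂. -/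
open Matrix

/-!
The firing vector is expanded in an orthonormal eigenbasis `U i` of the Laplacian, with eigenvalues
`μ i`. Write `p j = e_j - (1/n) 𝟙` for the projection of the `j`-th basis vector orthogonally to the
constants. Since `x k = 0`, one has `-s / n = ⟨p k, x⟩ = ∑ i, ⟨p k, U i⟩ ⟨U i, x⟩`. If `μ i = 0`,
then `U i` is constant by connectedness, so the term vanishes. If `μ i ≠ 0`, then `U i` is
orthogonal to the constants, and `⟨U i, x⟩ = ⟨U i, d⟩ / μ i = ∑ j, d j ⟨p j, U i⟩ / μ i`. Hence
`-s / n = ∑ j, d j * P k j`, where `P k j = ∑ i, ⟨p k, U i⟩ ⟨p j, U i⟩ / μ i` is an entry of the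
pseudo-inverse of the Laplacian. As every nonzero `μ i` is at least `λ₂`, the inequality
`2 |a b| ≤ a² + b²` and Parseval give
`|P k j| ≤ (‖p k‖² + ‖p j‖²) / (2 λ₂) = (1 - 1/n) / λ₂`, and summing over `j` bounds `s`.
-/

/-- An orthonormal eigenbasis of a real symmetric matrix, in coordinates: orthonormality is recorded
as Parseval's identity for the dot product. -/
lemma exists_eigenbasis_parseval {n : ℕ} (A : Matrix (Fin n) (Fin n) ℝ) (hA : A.IsHermitian) :
    ∃ (U : Fin n → Fin n → ℝ) (μ : Fin n → ℝ),
      (∀ i, U i ≠ 0) ∧ (∀ i, A *ᵥ U i = μ i • U i) ∧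
      ∀ v w : Fin n → ℝ, ∑ i, (v ⬝ᵥ U i) * (U i ⬝ᵥ w) = v ⬝ᵥ w := by
  refine ⟨fun i => hA.eigenvectorBasis i, hA.eigenvalues, fun i h => ?_, fun i => ?_,
    fun v w => ?_⟩
  · apply hA.eigenvectorBasis.orthonormal.ne_zero i
    ext j
    exact congrFun h j
  · exact hA.mulVec_eigenvectorBasis i
  · have := hA.eigenvectorBasis.sum_inner_mul_inner (WithLp.toLp 2 v) (WithLp.toLp 2 w)
    simpa [EuclideanSpace.inner_eq_star_dotProduct, dotProduct_comm] using this

/-- The projection of the `k`-th standard basis vector onto the orthogonal complement of the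
constant vectors. -/
noncomputable def centered {n : ℕ} (k : Fin n) : Fin n → ℝ :=
  fun j => (Pi.single k 1 : Fin n → ℝ) j - 1 / (n : ℝ)

lemma centered_dotProduct {n : ℕ} (k : Fin n) (v : Fin n → ℝ) :
    centered k ⬝ᵥ v = v k - (∑ j, v j) / n := by
  simp only [centered, dotProduct, sub_mul, Finset.sum_sub_distrib, ← Finset.mul_sum]
  rw [show ∑ i, (Pi.single k (1 : ℝ) : Fin n → ℝ) i * v i = v k by
    simp [Pi.single_apply]]
  ring

lemma centered_dotProduct_self {n : ℕ} (hn : (n : ℝ) ≠ 0) (k : Fin n) :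
    centered k ⬝ᵥ centered k = 1 - 1 / (n : ℝ) := by
  rw [centered_dotProduct]
  have : ∑ j, centered k j = 0 := by
    simp [centered, Finset.sum_sub_distrib, hn]
  rw [this]
  simp [centered]

lemma lapMatrix_dotProduct_comm {n : ℕ} (G : SimpleGraph (Fin n)) [DecidableRel G.Adj]
    (v w : Fin n → ℝ) : v ⬝ᵥ (G.lapMatrix ℝ *ᵥ w) = (G.lapMatrix ℝ *ᵥ v) ⬝ᵥ w := by
  rw [dotProduct_mulVec, ← mulVec_transpose, (G.isSymm_lapMatrix (R := ℝ)).eq]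

lemma centered_dotProduct_kernel {n : ℕ} (hn : (n : ℝ) ≠ 0) (G : SimpleGraph (Fin n))
    [DecidableRel G.Adj] (hG : G.Connected) (v : Fin n → ℝ) (hv : G.lapMatrix ℝ *ᵥ v = 0)
    (k : Fin n) : centered k ⬝ᵥ v = 0 := by
  have h := (G.lapMatrix_mulVec_eq_zero_iff_forall_reachable).1 hv
  rw [centered_dotProduct, Finset.sum_congr rfl fun j _ => h j k (hG.preconnected j k)]
  simp only [Finset.sum_const, Finset.card_univ, Fintype.card_fin, nsmul_eq_mul]
  field_simp
  ring

lemma centered_dotProduct_eigenvector {n : ℕ} (G : SimpleGraph (Fin n)) [DecidableRel G.Adj]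
    (v : Fin n → ℝ) (μ : ℝ) (hμ : μ ≠ 0) (hv : G.lapMatrix ℝ *ᵥ v = μ • v) (j : Fin n) :
    centered j ⬝ᵥ v = v j := by
  have h := lapMatrix_dotProduct_comm G (fun _ => 1) v
  rw [hv, G.lapMatrix_mulVec_const_eq_zero] at h
  have : ∑ i, v i = 0 := by
    simpa [dotProduct, ← Finset.mul_sum, hμ] using h
  simp [centered_dotProduct, this]

/-- For connected `G`, the coordinate `⟨centered k, x⟩` is bounded by the `ℓ¹` norm of `L x`: the
entries of the pseudo-inverse of `L` are at most `(1 - 1/n) / λ₂` in absolute value. -/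
lemma abs_centered_dotProduct_le {n : ℕ} (hn : (n : ℝ) ≠ 0)
    (G : SimpleGraph (Fin n)) [DecidableRel G.Adj] (hG : G.Connected)
    (lam2 : ℝ) (hl2pos : 0 < lam2)
    (hl2min : ∀ μ : ℝ, μ ≠ 0 →
      (∃ v : Fin n → ℝ, v ≠ 0 ∧ G.lapMatrix ℝ *ᵥ v = μ • v) → lam2 ≤ μ)
    (x : Fin n → ℝ) (k : Fin n) :
    |centered k ⬝ᵥ x| ≤ (∑ j, |(G.lapMatrix ℝ *ᵥ x) j|) * ((1 - 1 / (n : ℝ)) / lam2) := by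
  obtain ⟨U, μ, hU0, hU, hpars⟩ :=
    exists_eigenbasis_parseval (G.lapMatrix ℝ) (G.posSemidef_lapMatrix ℝ).isHermitian
  set d := G.lapMatrix ℝ *ᵥ x with hd
  set a : Fin n → Fin n → ℝ := fun j i => centered j ⬝ᵥ U i with ha
  have hzero : ∀ i, μ i = 0 → ∀ j, a j i = 0 := fun i hi j =>
    centered_dotProduct_kernel hn G hG (U i) (by rw [hU, hi, zero_smul]) j
  have hterm : ∀ i, a k i * (U i ⬝ᵥ x) = ∑ j, d j * (a k i * a j i / μ i) := by
    intro i
    by_cases hi : μ i = 0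
    · simp [hzero i hi]
    · have h1 : ∀ j, a j i = U i j := fun j =>
        centered_dotProduct_eigenvector G (U i) (μ i) hi (hU i) j
      have h2 : U i ⬝ᵥ d = μ i * (U i ⬝ᵥ x) := by
        rw [hd, lapMatrix_dotProduct_comm, hU, smul_dotProduct, smul_eq_mul]
      have h3 : U i ⬝ᵥ x = (U i ⬝ᵥ d) / μ i := by rw [h2]; field_simp
      rw [h3, dotProduct, Finset.sum_div, Finset.mul_sum]
      refine Finset.sum_congr rfl fun j _ => ?_
      rw [h1 j]
      ring
  have hsq : ∀ j, ∑ i, a j i ^ 2 = 1 - 1 / (n : ℝ) := by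
    intro j
    rw [← centered_dotProduct_self hn j, ← hpars]
    refine Finset.sum_congr rfl fun i _ => ?_
    rw [dotProduct_comm (U i), sq]
  have hP : ∀ j, |∑ i, a k i * a j i / μ i| ≤ (1 - 1 / (n : ℝ)) / lam2 := by
    intro j
    calc |∑ i, a k i * a j i / μ i| ≤ ∑ i, |a k i * a j i / μ i| :=
          Finset.abs_sum_le_sum_abs _ _
      _ ≤ ∑ i, (a k i ^ 2 + a j i ^ 2) / 2 / lam2 := by
          refine Finset.sum_le_sum fun i _ => ?_
          by_cases hi : μ i = 0
          · simp [hzero i hi]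
          · have hle := hl2min (μ i) hi ⟨U i, hU0 i, hU i⟩
            rw [abs_div, abs_of_pos (hl2pos.trans_le hle)]
            have h2 : |a k i * a j i| ≤ (a k i ^ 2 + a j i ^ 2) / 2 := by
              rw [abs_le]
              constructor <;> nlinarith [sq_nonneg (a k i - a j i), sq_nonneg (a k i + a j i)]
            gcongr
      _ = (1 - 1 / (n : ℝ)) / lam2 := by
          rw [← Finset.sum_div, ← Finset.sum_div, Finset.sum_add_distrib, hsq, hsq]
          ring
  have hmain : centered k ⬝ᵥ x = ∑ j, d j * ∑ i, a k i * a j i / μ i := by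
    rw [← hpars, Finset.sum_congr rfl fun i _ => hterm i, Finset.sum_comm]
    simp_rw [Finset.mul_sum]
  rw [hmain, Finset.sum_mul]
  refine (Finset.abs_sum_le_sum_abs _ _).trans (Finset.sum_le_sum fun j _ => ?_)
  rw [abs_mul]
  exact mul_le_mul_of_nonneg_left (hP j) (abs_nonneg _)

/-- For a connected vertex-transitive graph `G` on `n ≥ 2` vertices with algebraic
connectivity `λ₂`, the duration `s = ∑ i, x i` of a terminating chip-firing game with
`N` chips satisfies `s ≤ 2 (n-1) N / λ₂`. -/
theorem chipFiring_duration_vertexTransitive_bound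
    {n : ℕ} (hn : 2 ≤ n)
    (G : SimpleGraph (Fin n)) [DecidableRel G.Adj]
    (hG : G.Connected)
    (hvt : ∀ v w : Fin n, ∃ e : G ≃g G, e v = w)
    (lam2 : ℝ) (hl2pos : 0 < lam2)
    (hl2eig : ∃ v : Fin n → ℝ, v ≠ 0 ∧ G.lapMatrix ℝ *ᵥ v = lam2 • v)
    (hl2min : ∀ μ : ℝ, μ ≠ 0 →
      (∃ v : Fin n → ℝ, v ≠ 0 ∧ G.lapMatrix ℝ *ᵥ v = μ • v) → lam2 ≤ μ)
    (x : Fin n → ℕ) (d : Fin n → ℤ)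
    (hLx : G.lapMatrix ℤ *ᵥ (fun i => (x i : ℤ)) = d)
    (k : Fin n) (hk : x k = 0)
    (N : ℝ) (hN0 : 0 ≤ N) (hN : (∑ i, |(d i : ℝ)|) ≤ 2 * N) :
    ((∑ i, x i : ℕ) : ℝ) ≤ 2 * ((n : ℝ) - 1) * N / lam2 := by
  have hn2 : (2 : ℝ) ≤ n := by exact_mod_cast hn
  have hn0 : (n : ℝ) ≠ 0 := by positivity
  have hd : ∀ j, (G.lapMatrix ℝ *ᵥ fun i => (x i : ℝ)) j = (d j : ℝ) := by
    intro j
    rw [← hLx]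
    simp [SimpleGraph.lapMatrix_mulVec_apply]
  have h := abs_centered_dotProduct_le hn0 G hG lam2 hl2pos hl2min (fun i => (x i : ℝ)) k
  simp only [hd, centered_dotProduct, hk, Nat.cast_zero, zero_sub, abs_neg] at h
  have hc : 0 ≤ (1 - 1 / (n : ℝ)) / lam2 := by
    have : 1 / (n : ℝ) ≤ 1 := by rw [div_le_one (by positivity)]; linarith
    exact div_nonneg (by linarith) hl2pos.le
  have h2 := ((le_abs_self _).trans h).trans (mul_le_mul_of_nonneg_right hN hc)
  rw [div_le_iff₀ (by positivity)] at h2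
  push_cast
  refine h2.trans_eq ?_
  field_simp
end

section
/- Let G be a connected simple graph on n ≥ 1 vertices with Laplacian L, let J be the n × n all-ones matrix, and let c be a nonzero real number. Then the matrix L + cJ is invertible, and the Moore–Penrose pseudoinverse B of L satisfies B = (L + cJ)^{-1} − (1/(c·n²))·J. -/
/-!
The explicit candidate inverse of `L + cJ` is `B + (1/(cn²)) J`. As `LJ = JL = 0`, `J² = nJ`
and `JB = 0` (because `B = (BL)B = L Bᵀ B`), the product of the two is `LB + (1/n) J`, so
everything comes down to `LB = 1 - (1/n) J`. The difference `P = 1 - LB - (1/n) J` satisfies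
`LP = 0`, so by connectedness each of its columns is constant, and `JP = 0`, so each of its
columns sums to zero; hence `P = 0`.
-/

open Matrix

/-- For a connected graph on `n ≥ 1` vertices with Laplacian `L`, all-ones matrix `J`
and any `c ≠ 0`, the matrix `L + cJ` is invertible and the Moore–Penrose pseudoinverse
`B` of `L` satisfies `B = (L + cJ)⁻¹ - (1/(c n²)) J`. -/
theorem lapMatrix_pinv_eq_inv_add_smul_allOnes
    {n : ℕ} (hn : 1 ≤ n)
    (G : SimpleGraph (Fin n)) [DecidableRel G.Adj]
    (hG : G.Connected)
    (B : Matrix (Fin n) (Fin n) ℝ)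
    (hB1 : G.lapMatrix ℝ * B * G.lapMatrix ℝ = G.lapMatrix ℝ)
    (hB2 : B * G.lapMatrix ℝ * B = B)
    (hB3 : (G.lapMatrix ℝ * B)ᵀ = G.lapMatrix ℝ * B)
    (hB4 : (B * G.lapMatrix ℝ)ᵀ = B * G.lapMatrix ℝ)
    (c : ℝ) (hc : c ≠ 0)
    (J : Matrix (Fin n) (Fin n) ℝ) (hJ : ∀ i j, J i j = 1) :
    IsUnit (G.lapMatrix ℝ + c • J) ∧
    B = (G.lapMatrix ℝ + c • J)⁻¹ - (1 / (c * (n : ℝ) ^ 2)) • J := by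
  have hn0 : (n : ℝ) ≠ 0 := by
    have : n ≠ 0 := by omega
    exact_mod_cast this
  have hker : ∀ x : Fin n → ℝ, G.lapMatrix ℝ *ᵥ x = 0 → ∀ i j, x i = x j := fun x hx i j =>
    (G.lapMatrix_mulVec_eq_zero_iff_forall_reachable.mp hx) i j (hG.preconnected i j)
  have hLt : (G.lapMatrix ℝ)ᵀ = G.lapMatrix ℝ := G.isSymm_lapMatrix (R := ℝ)
  have hLJ : G.lapMatrix ℝ * J = 0 := by
    ext i j
    have h := congrFun (G.lapMatrix_mulVec_const_eq_zero (R := ℝ)) i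
    simpa [Matrix.mul_apply, hJ, Matrix.mulVec, dotProduct] using h
  generalize G.lapMatrix ℝ = L at *
  have hJt : Jᵀ = J := by
    ext i j
    simp [hJ]
  have hJL : J * L = 0 := by
    have h := congrArg Matrix.transpose hLJ
    rwa [transpose_mul, hLt, hJt, transpose_zero] at h
  have hJJ : J * J = (n : ℝ) • J := by
    ext i j
    simp [Matrix.mul_apply, hJ]
  have hJB : J * B = 0 := by
    rw [transpose_mul, hLt] at hB4
    rw [← hB2, ← hB4, ← Matrix.mul_assoc, ← Matrix.mul_assoc, hJL, Matrix.zero_mul,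
      Matrix.zero_mul]
  have hLLB : L * (L * B) = L := by
    have h := congrArg Matrix.transpose hB1
    rwa [transpose_mul, hB3, hLt] at h
  have hLP : L * (1 - L * B - (1 / (n : ℝ)) • J) = 0 := by
    rw [Matrix.mul_sub, Matrix.mul_sub, Matrix.mul_smul, hLLB, hLJ]
    simp
  have hJP : J * (1 - L * B - (1 / (n : ℝ)) • J) = 0 := by
    rw [Matrix.mul_sub, Matrix.mul_sub, Matrix.mul_smul, ← Matrix.mul_assoc, hJL, hJJ, smul_smul,
      one_div_mul_cancel hn0]
    simp
  have hP : 1 - L * B - (1 / (n : ℝ)) • J = 0 := by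
    generalize 1 - L * B - (1 / (n : ℝ)) • J = P at *
    ext i j
    have hcol : ∀ k, P k j = P i j := fun k =>
      hker (fun k => P k j) (funext fun a => congrFun (congrFun hLP a) j) k i
    have hsum := congrFun (congrFun hJP i) j
    simpa [Matrix.mul_apply, hJ, hcol, hn0] using hsum
  have hinv : (L + c • J) * (B + (1 / (c * (n : ℝ) ^ 2)) • J) = 1 := by
    have hcoef : c * (1 / (c * (n : ℝ) ^ 2)) * n = 1 / n := by
      field_simp
    rw [Matrix.add_mul, Matrix.mul_add, Matrix.mul_add, Matrix.mul_smul, hLJ, Matrix.smul_mul,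
      hJB, Matrix.smul_mul, Matrix.mul_smul, hJJ, smul_smul, smul_smul, hcoef]
    rw [sub_sub, sub_eq_zero] at hP
    simp [hP]
  refine ⟨(isUnit_iff_isUnit_det _).mpr (isUnit_det_of_right_inverse hinv), ?_⟩
  rw [inv_eq_right_inv hinv, add_sub_cancel_right]
end

section
/- Let G be a connected simple graph on n ≥ 2 vertices with minimum degree δ, Laplacian L with eigenvalues 0 = λ₁ < λ₂ ≤ … ≤ λ_n, and Moore–Penrose pseudoinverse B of L. Then every diagonal entry of B satisfies B_{ii} ≤ (λ₂ + λ_n·(n−1)/n − d_i)/(λ₂·λ_n), where d_i = deg(i); in particular f = max_i B_{ii} ≤ (λ₂ + λ_n·(n−1)/n − δ)/(λ₂·λ_n). -/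
open Matrix

/-!
Since `L` is symmetric, it has an orthonormal eigenbasis `u_k` with eigenvalues `μ_k`, and the
Penrose equations force `B u_k = μ_k⁻¹ u_k` (with `0⁻¹ = 0`). Each `μ_k` is either `0` or lies in
`[λ₂, λ_n]`, so `(μ_k - λ₂)(λ_n - μ_k) ≥ 0` gives `λ₂ λ_n μ_k⁻¹ ≤ (λ₂ + λ_n) μ_k μ_k⁻¹ - μ_k`,
i.e. `λ₂ λ_n B ≤ (λ₂ + λ_n) L B - L` in the Loewner order. The projection `L B` annihilates the
all-ones vector, so its diagonal entries are at most `1 - 1/n`. Comparing diagonal entries gives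
the bound, even with `λ₂ (n-1)/n` in place of `λ₂`.
-/

/-- Diagonal entries of a matrix acting diagonally on the columns of an orthogonal matrix. -/
lemma diag_eq_sum_of_mul_eq {ι : Type*} [Fintype ι] [DecidableEq ι] (A U : Matrix ι ι ℝ)
    (a : ι → ℝ) (hU : U * Uᵀ = 1) (h : A * U = U * diagonal a) (i : ι) :
    A i i = ∑ k, a k * U i k ^ 2 := by
  have hA : A = U * diagonal a * Uᵀ := by
    rw [← h, Matrix.mul_assoc, hU, Matrix.mul_one]
  rw [hA, Matrix.mul_apply]
  refine Finset.sum_congr rfl fun k _ => ?_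
  rw [Matrix.mul_diagonal, Matrix.transpose_apply]
  ring

/-- The pseudoinverse of a symmetric matrix inverts its eigenvalues; this includes the kernel,
thanks to the convention `0⁻¹ = 0`. -/
lemma pinv_mulVec_eigenvector {ι : Type*} [Fintype ι] (L B : Matrix ι ι ℝ)
    (hL : Lᵀ = L) (hB1 : L * B * L = L) (hB2 : B * L * B = B)
    (hB3 : (L * B)ᵀ = L * B) (hB4 : (B * L)ᵀ = B * L)
    (v : ι → ℝ) (μ : ℝ) (hv : L *ᵥ v = μ • v) : B *ᵥ v = μ⁻¹ • v := by
  rw [Matrix.transpose_mul, hL] at hB3 hB4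
  by_cases hμ : μ = 0
  · subst hμ
    have hv0 : L *ᵥ v = 0 := by simpa using hv
    rw [_root_.inv_zero, zero_smul, ← hB2, Matrix.mul_assoc, ← hB3, ← Matrix.mulVec_mulVec,
      ← Matrix.mulVec_mulVec, hv0, Matrix.mulVec_zero, Matrix.mulVec_zero]
  · have hT : L * Bᵀ * L = L := by
      have h := congrArg Matrix.transpose hB1
      rwa [Matrix.transpose_mul, Matrix.transpose_mul, hL, ← Matrix.mul_assoc] at h
    -- The projection `B L` fixes the range of `L`: `B L L = L Bᵀ L = L`.
    have h1 : B *ᵥ (L *ᵥ (L *ᵥ v)) = L *ᵥ v := by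
      rw [Matrix.mulVec_mulVec, ← hB4, Matrix.mulVec_mulVec, hT]
    rw [hv, Matrix.mulVec_smul, hv, Matrix.mulVec_smul, Matrix.mulVec_smul] at h1
    have h2 : μ • B *ᵥ v = v := smul_right_injective _ hμ h1
    rw [eq_inv_smul_iff₀ hμ]
    exact h2

/-- An orthogonal projection annihilating the all-ones vector has diagonal entries at most
`1 - 1/n`: row `i` of `1 - P` sums to `1` and has squared norm `1 - P i i`, so Cauchy–Schwarz
applies. -/
lemma proj_diag_le {n : ℕ} (hn : 0 < n) (P : Matrix (Fin n) (Fin n) ℝ)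
    (hsymm : Pᵀ = P) (hidem : P * P = P) (hone : P *ᵥ (fun _ => 1) = 0) (i : Fin n) :
    P i i ≤ 1 - 1 / (n : ℝ) := by
  have hR : (1 - P) * (1 - P)ᵀ = 1 - P := by
    rw [Matrix.transpose_sub, hsymm, Matrix.transpose_one, Matrix.sub_mul, Matrix.mul_sub,
      Matrix.mul_sub, hidem]
    simp
  have hsq : ∑ j, (1 - P) i j ^ 2 = 1 - P i i := by
    have h := congrFun (congrFun hR i) i
    rw [Matrix.mul_apply] at h
    simpa [Matrix.transpose_apply, ← sq] using h
  have hsum : ∑ j, (1 - P) i j = 1 := by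
    have h := congrFun hone i
    simp only [Matrix.mulVec, dotProduct, mul_one, Pi.zero_apply] at h
    simp [Matrix.sub_apply, Finset.sum_sub_distrib, h, Matrix.one_apply]
  have hcs := sq_sum_le_card_mul_sum_sq (s := Finset.univ) (f := fun j => (1 - P) i j)
  rw [hsum, hsq, Finset.card_univ, Fintype.card_fin] at hcs
  have hn' : (0 : ℝ) < n := by exact_mod_cast hn
  have : 1 / (n : ℝ) ≤ 1 - P i i := by
    rw [div_le_iff₀ hn']
    linarith
  linarith

/-- For a connected graph on `n ≥ 2` vertices with minimum degree `δ` and Laplacian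
eigenvalues `0 = λ₁ < λ₂ ≤ … ≤ λ_n`, every diagonal entry of the Moore–Penrose
pseudoinverse `B` of the Laplacian satisfies
`B i i ≤ (λ₂ + λ_n (n-1)/n - deg i)/(λ₂ λ_n)`; in particular
`f = max_i B i i ≤ (λ₂ + λ_n (n-1)/n - δ)/(λ₂ λ_n)`. -/
theorem lapMatrix_pinv_diag_le_of_eigenvalue_bounds
    {n : ℕ} (hn : 2 ≤ n)
    (G : SimpleGraph (Fin n)) [DecidableRel G.Adj]
    (hG : G.Connected)
    (B : Matrix (Fin n) (Fin n) ℝ)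
    (hB1 : G.lapMatrix ℝ * B * G.lapMatrix ℝ = G.lapMatrix ℝ)
    (hB2 : B * G.lapMatrix ℝ * B = B)
    (hB3 : (G.lapMatrix ℝ * B)ᵀ = G.lapMatrix ℝ * B)
    (hB4 : (B * G.lapMatrix ℝ)ᵀ = B * G.lapMatrix ℝ)
    (lam2 : ℝ) (hl2pos : 0 < lam2)
    (hl2eig : ∃ v : Fin n → ℝ, v ≠ 0 ∧ G.lapMatrix ℝ *ᵥ v = lam2 • v)
    (hl2min : ∀ μ : ℝ, μ ≠ 0 →
      (∃ v : Fin n → ℝ, v ≠ 0 ∧ G.lapMatrix ℝ *ᵥ v = μ • v) → lam2 ≤ μ)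
    (lamn : ℝ)
    (hlneig : ∃ v : Fin n → ℝ, v ≠ 0 ∧ G.lapMatrix ℝ *ᵥ v = lamn • v)
    (hlnmax : ∀ μ : ℝ,
      (∃ v : Fin n → ℝ, v ≠ 0 ∧ G.lapMatrix ℝ *ᵥ v = μ • v) → μ ≤ lamn) :
    (∀ i, B i i ≤ (lam2 + lamn * ((n : ℝ) - 1) / n - (G.degree i : ℝ)) / (lam2 * lamn)) ∧
    (∀ i, B i i ≤ (lam2 + lamn * ((n : ℝ) - 1) / n - (G.minDegree : ℝ)) / (lam2 * lamn)) := by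
  have hn0 : (0 : ℝ) < n := by exact_mod_cast (by omega : 0 < n)
  have hle : lam2 ≤ lamn := hlnmax lam2 hl2eig
  have hlnpos : 0 < lamn := hl2pos.trans_le hle
  have hprod : 0 < lam2 * lamn := mul_pos hl2pos hlnpos
  have hmain : ∀ i, B i i ≤
      (lam2 + lamn * ((n : ℝ) - 1) / n - (G.degree i : ℝ)) / (lam2 * lamn) := by
    intro i
    have hLii : G.lapMatrix ℝ i i = (G.degree i : ℝ) := by
      simp [SimpleGraph.lapMatrix, SimpleGraph.degMatrix]
    have hL1 : G.lapMatrix ℝ *ᵥ (fun _ => 1) = 0 := G.lapMatrix_mulVec_const_eq_zero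
    have hLs : (G.lapMatrix ℝ)ᵀ = G.lapMatrix ℝ := G.isSymm_lapMatrix ℝ
    have hLh : (G.lapMatrix ℝ).IsHermitian := by
      rw [Matrix.IsHermitian, Matrix.conjTranspose_eq_transpose_of_trivial, hLs]
    generalize G.lapMatrix ℝ = L at *
    have hP : (L * B) i i ≤ 1 - 1 / (n : ℝ) := by
      refine proj_diag_le (by omega) _ hB3 ?_ ?_ i
      · rw [← Matrix.mul_assoc, hB1]
      · rw [← hB3, Matrix.transpose_mul, hLs, ← Matrix.mulVec_mulVec, hL1, Matrix.mulVec_zero]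
    let μ := hLh.eigenvalues
    let U : Matrix (Fin n) (Fin n) ℝ := (hLh.eigenvectorUnitary : Matrix (Fin n) (Fin n) ℝ)
    have hU : U * Uᵀ = 1 := by
      have h := Unitary.coe_mul_star_self hLh.eigenvectorUnitary
      rwa [Unitary.coe_star, Matrix.star_eq_conjTranspose, Matrix.conjTranspose_eq_transpose_of_trivial] at h
    have hLu : ∀ k, L *ᵥ U.col k = μ k • U.col k := fun k => by
      exact hLh.mulVec_eigenvectorBasis k
    have hune : ∀ k, U.col k ≠ 0 := fun k h0 => by
      have h : (Uᵀ * U) k k = 1 := by rw [mul_eq_one_comm.mp hU, Matrix.one_apply_eq]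
      have h' : ∀ j, U j k = 0 := fun j => congrFun h0 j
      simp [Matrix.mul_apply, h'] at h
    have hBu : ∀ k, B *ᵥ U.col k = (μ k)⁻¹ • U.col k := fun k =>
      pinv_mulVec_eigenvector L B hLs hB1 hB2 hB3 hB4 _ _ (hLu k)
    have hcols : ∀ (A : Matrix (Fin n) (Fin n) ℝ) (a : Fin n → ℝ),
        (∀ k, A *ᵥ U.col k = a k • U.col k) → A i i = ∑ k, a k * U i k ^ 2 := by
      intro A a h
      refine diag_eq_sum_of_mul_eq A U a hU ?_ i
      ext j k
      rw [Matrix.mul_diagonal, mul_comm]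
      exact congrFun (h k) j
    have hBii := hcols B _ hBu
    have hLii' := hcols L _ hLu
    have hPii := hcols (L * B) (fun k => (μ k)⁻¹ * μ k) fun k => by
      rw [← Matrix.mulVec_mulVec, hBu, Matrix.mulVec_smul, hLu, smul_smul]
    have hkey : lam2 * lamn * B i i ≤ (lam2 + lamn) * (L * B) i i - L i i := by
      rw [hBii, hLii', hPii, Finset.mul_sum, Finset.mul_sum, ← Finset.sum_sub_distrib]
      refine Finset.sum_le_sum fun k _ => ?_
      rw [← mul_assoc, ← mul_assoc, ← sub_mul]
      refine mul_le_mul_of_nonneg_right ?_ (sq_nonneg _)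
      by_cases h0 : μ k = 0
      · simp [h0]
      · have h2 : lam2 ≤ μ k := hl2min _ h0 ⟨_, hune k, hLu k⟩
        have h3 : μ k ≤ lamn := hlnmax _ ⟨_, hune k, hLu k⟩
        rw [inv_mul_cancel₀ h0, mul_one, ← div_eq_mul_inv, div_le_iff₀ (hl2pos.trans_le h2)]
        nlinarith [mul_nonneg (sub_nonneg.mpr h2) (sub_nonneg.mpr h3)]
    rw [le_div_iff₀ hprod, ← hLii]
    have hbound := mul_le_mul_of_nonneg_left hP (add_pos hl2pos hlnpos).le
    have hfrac : lamn * ((n : ℝ) - 1) / n = lamn * (1 - 1 / n) := by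
      field_simp
    have hdrop : 0 ≤ lam2 * (1 / (n : ℝ)) := by positivity
    rw [hfrac]
    nlinarith
  refine ⟨hmain, fun i => (hmain i).trans ?_⟩
  have hdeg : (G.minDegree : ℝ) ≤ G.degree i := by exact_mod_cast G.minDegree_le_degree i
  gcongr
end

section
/- Let G be a connected d-regular simple graph on n vertices with d > n/2 − 1, let L be its Laplacian, B the Moore–Penrose pseudoinverse of L, and set f = max_i B_{ii}, o = max_{i≠j} |B_{ij}|. Then o ≤ f/(2d − n + 3) + 2/n². -/
open Matrix

/-!
Let `c = n - 1 - d` be the number of non-neighbours of a vertex and `D = d + 1`, so that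
`D + c = n`, `c < D` and `2d - n + 3 = D - c + 1`. For a connected graph `L * B = I - J/n`, and the
columns of `B` sum to zero. Eliminating the neighbours of `i` between these two facts gives, for
`i ≠ j`,

  `D * B i j + ∑ k not adjacent to i, k ≠ i, B k j = -1/n`     (`compl_sum_eq`).

Since every entry of `B` is at least `-o`, this yields the upper bound `D * B i j ≤ c * o - 1/n`
for all off-diagonal entries. In particular the extremal off-diagonal entry must be `-o`.
Substituting the upper bound back into the identity at the extremal `(i, j)`:

* if `i` and `j` are adjacent, all non-neighbours of `i` contribute off-diagonal entries, and
  `(D² - c²) * o ≤ (D - c)/n`, that is `o ≤ 1/n²`;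
* otherwise one contribution is `B j j ≤ f`, and `(D² - c(c-1)) * o ≤ D * f + (D - c + 1)/n`.

Both are stronger than the claim.
-/

section Pseudoinverse

variable {n : ℕ} {G : SimpleGraph (Fin n)} [DecidableRel G.Adj]
  {B : Matrix (Fin n) (Fin n) ℝ}

/-- The columns of `B` sum to zero, since `B = (B L) B = L Bᵀ B` and the columns of `L` do. -/
lemma pinv_col_sum (hB2 : B * G.lapMatrix ℝ * B = B)
    (hB4 : (B * G.lapMatrix ℝ)ᵀ = B * G.lapMatrix ℝ) (j : Fin n) : ∑ k, B k j = 0 := by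
  have hL : (G.lapMatrix ℝ)ᵀ = G.lapMatrix ℝ := G.isSymm_lapMatrix ℝ
  have h1 : (fun _ => (1 : ℝ)) ᵥ* G.lapMatrix ℝ = 0 := by
    rw [← hL, vecMul_transpose]
    exact G.lapMatrix_mulVec_const_eq_zero
  have h2 : (fun _ => (1 : ℝ)) ᵥ* B = 0 := by
    rw [← hB2, ← hB4, transpose_mul, hL, ← vecMul_vecMul, ← vecMul_vecMul, h1]
    simp
  simpa [vecMul, dotProduct] using congrFun h2 j

/-- `L * B = I - J/n`: the columns of `L * B - I` lie in the kernel of `L`, which consists of the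
constant vectors by connectedness; symmetry makes the constants equal, and the zero column sums of
`L` determine their value. -/
lemma lap_mul_pinv_apply (hG : G.Connected)
    (hB1 : G.lapMatrix ℝ * B * G.lapMatrix ℝ = G.lapMatrix ℝ)
    (hB3 : (G.lapMatrix ℝ * B)ᵀ = G.lapMatrix ℝ * B) (i j : Fin n) :
    (G.lapMatrix ℝ * B) i j = (if i = j then 1 else 0) - 1 / (n : ℝ) := by
  have hL : (G.lapMatrix ℝ)ᵀ = G.lapMatrix ℝ := G.isSymm_lapMatrix ℝ
  obtain ⟨M, hM⟩ : ∃ M, M = G.lapMatrix ℝ * B - 1 := ⟨_, rfl⟩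
  have hMsymm : ∀ a b, M a b = M b a := by
    intro a b
    have : Mᵀ = M := by rw [hM, transpose_sub, hB3, transpose_one]
    rw [← this, transpose_apply, this]
  have hLM : G.lapMatrix ℝ * M = 0 := by
    have h := congrArg transpose hB1
    rw [transpose_mul, hB3, hL] at h
    rw [hM, mul_sub, h, mul_one, sub_self]
  have hconst : ∀ a b c, M a c = M b c := by
    intro a b c
    have h : G.lapMatrix ℝ *ᵥ (fun k => M k c) = 0 := by
      ext a
      exact congrFun (congrFun hLM a) c
    exact (G.lapMatrix_mulVec_eq_zero_iff_forall_reachable.mp h) a b (hG.preconnected a b)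
  have hsum : ∑ k, (G.lapMatrix ℝ * B) k j = 0 := by
    have h1 : (fun _ => (1 : ℝ)) ᵥ* G.lapMatrix ℝ = 0 := by
      rw [← hL, vecMul_transpose]
      exact G.lapMatrix_mulVec_const_eq_zero
    have h2 : (fun _ => (1 : ℝ)) ᵥ* (G.lapMatrix ℝ * B) = 0 := by
      rw [← vecMul_vecMul, h1]; simp
    simpa [vecMul, dotProduct] using congrFun h2 j
  have hLB : ∀ a b, (G.lapMatrix ℝ * B) a b = M a b + if a = b then 1 else 0 := by
    intro a b
    rw [hM, Matrix.sub_apply, Matrix.one_apply]; ring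
  simp only [hLB, Finset.sum_add_distrib, hconst _ i j] at hsum
  simp at hsum
  have hn : (n : ℝ) ≠ 0 := by
    have := i.pos
    positivity
  rw [hLB]
  field_simp
  linarith

/-- The diagonal entries are values of the Laplacian quadratic form: `B j j = bᵀ L b` for `b` the
`j`-th column of `B`. -/
lemma pinv_diag_nonneg (hG : G.Connected)
    (hB1 : G.lapMatrix ℝ * B * G.lapMatrix ℝ = G.lapMatrix ℝ)
    (hB2 : B * G.lapMatrix ℝ * B = B)
    (hB3 : (G.lapMatrix ℝ * B)ᵀ = G.lapMatrix ℝ * B)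
    (hB4 : (B * G.lapMatrix ℝ)ᵀ = B * G.lapMatrix ℝ) (j : Fin n) : 0 ≤ B j j := by
  have h := (G.posSemidef_lapMatrix ℝ).dotProduct_mulVec_nonneg (fun k => B k j)
  have h1 : G.lapMatrix ℝ *ᵥ (fun k => B k j)
      = fun i => (if i = j then 1 else 0) - 1 / (n : ℝ) := by
    ext i
    exact lap_mul_pinv_apply hG hB1 hB3 i j
  rw [h1] at h
  simpa [dotProduct, mul_sub, Finset.sum_sub_distrib, ← Finset.sum_mul,
    pinv_col_sum hB2 hB4 j] using h

/-- The equation `L * B = I - J/n` off the diagonal, with the neighbours of `i` traded for the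
non-neighbours by means of the zero column sums. -/
lemma compl_sum_eq {d : ℕ} (hG : G.Connected) (hreg : G.IsRegularOfDegree d)
    (hB1 : G.lapMatrix ℝ * B * G.lapMatrix ℝ = G.lapMatrix ℝ)
    (hB2 : B * G.lapMatrix ℝ * B = B)
    (hB3 : (G.lapMatrix ℝ * B)ᵀ = G.lapMatrix ℝ * B)
    (hB4 : (B * G.lapMatrix ℝ)ᵀ = B * G.lapMatrix ℝ) {i j : Fin n} (hij : i ≠ j) :
    ((d : ℝ) + 1) * B i j + ∑ k ∈ Gᶜ.neighborFinset i, B k j = -(1 / (n : ℝ)) := by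
  have h1 : (G.lapMatrix ℝ *ᵥ (fun k => B k j)) i = (if i = j then 1 else 0) - 1 / (n : ℝ) :=
    lap_mul_pinv_apply hG hB1 hB3 i j
  rw [G.lapMatrix_mulVec_apply, if_neg hij, hreg i] at h1
  have h2 := pinv_col_sum hB2 hB4 j
  have hi : i ∈ (G.neighborFinset i)ᶜ := by simp
  rw [← Finset.sum_add_sum_compl (G.neighborFinset i), ← Finset.sum_erase_add _ _ hi,
    Finset.erase_eq, ← G.neighborFinset_compl] at h2
  linarith

end Pseudoinverse

/-- For a connected `d`-regular graph on `n` vertices with `d > n/2 - 1`, the largest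
absolute value `o` of an off-diagonal entry of the Moore–Penrose pseudoinverse `B` of
the Laplacian and the largest diagonal entry `f` of `B` satisfy
`o ≤ f/(2d - n + 3) + 2/n²`. -/
theorem lapMatrix_pinv_offdiag_bound_of_dense_regular
    {n d : ℕ}
    (G : SimpleGraph (Fin n)) [DecidableRel G.Adj]
    (hG : G.Connected)
    (hreg : G.IsRegularOfDegree d)
    (hd : (n : ℝ) / 2 - 1 < (d : ℝ))
    (B : Matrix (Fin n) (Fin n) ℝ)
    (hB1 : G.lapMatrix ℝ * B * G.lapMatrix ℝ = G.lapMatrix ℝ)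
    (hB2 : B * G.lapMatrix ℝ * B = B)
    (hB3 : (G.lapMatrix ℝ * B)ᵀ = G.lapMatrix ℝ * B)
    (hB4 : (B * G.lapMatrix ℝ)ᵀ = B * G.lapMatrix ℝ)
    (f o : ℝ)
    (hf : IsGreatest (Set.range fun i => B i i) f)
    (ho : IsGreatest {r : ℝ | ∃ i j : Fin n, i ≠ j ∧ |B i j| = r} o) :
    o ≤ f / (2 * (d : ℝ) - n + 3) + 2 / (n : ℝ) ^ 2 := by
  obtain ⟨⟨i, j, hij, habs⟩, hmax⟩ := ho
  have hoff : ∀ a b, a ≠ b → |B a b| ≤ o := fun a b hab => hmax ⟨a, b, hab, rfl⟩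
  have ho0 : 0 ≤ o := habs ▸ abs_nonneg _
  have hdiag : ∀ k, 0 ≤ B k k := pinv_diag_nonneg hG hB1 hB2 hB3 hB4
  have hfj : B j j ≤ f := hf.2 ⟨j, rfl⟩
  have hf0 : 0 ≤ f := (hdiag j).trans hfj
  have hn0 : (0 : ℝ) < n := by exact_mod_cast i.pos
  have hlow : ∀ a b, -o ≤ B a b := by
    intro a b
    by_cases hab : a = b
    · subst hab
      linarith [hdiag a]
    · exact (abs_le.mp (hoff a b hab)).1
  have hdn : d < n := by
    have := G.degree_lt_card_verts i
    rwa [hreg i, Fintype.card_fin] at this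
  obtain ⟨c, hc⟩ : ∃ c : ℕ, n = c + (d + 1) := ⟨n - (d + 1), by omega⟩
  have hcard : ∀ a, (Gᶜ.neighborFinset a).card = c := by
    intro a
    rw [SimpleGraph.card_neighborFinset_eq_degree, SimpleGraph.degree_compl, hreg a,
      Fintype.card_fin]
    omega
  have hcR : (n : ℝ) = c + (d + 1) := by exact_mod_cast hc
  have hcd : c + 1 ≤ d + 1 := by
    have : (c : ℝ) < d + 1 := by linarith
    exact_mod_cast this
  obtain ⟨D, hD⟩ : ∃ D : ℝ, D = d + 1 := ⟨_, rfl⟩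
  have hDc : (c : ℝ) + 1 ≤ D := by rw [hD]; exact_mod_cast hcd
  have hc0 : (0 : ℝ) ≤ c := Nat.cast_nonneg c
  have hD0 : 0 < D := by linarith
  obtain ⟨e, he⟩ : ∃ e : ℝ, e = 1 / (n : ℝ) := ⟨_, rfl⟩
  have he0 : 0 < e := by rw [he]; positivity
  have hne : (c + D) * e = 1 := by
    rw [he, hD, ← hcR]; field_simp
  have key : ∀ a b, a ≠ b → D * B a b + ∑ k ∈ Gᶜ.neighborFinset a, B k b = -e := by
    intro a b hab
    rw [hD, he]
    exact compl_sum_eq hG hreg hB1 hB2 hB3 hB4 hab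
  have hup : ∀ a b, a ≠ b → D * B a b ≤ c * o - e := by
    intro a b hab
    have h : ∑ k ∈ Gᶜ.neighborFinset a, (-o) ≤ ∑ k ∈ Gᶜ.neighborFinset a, B k b :=
      Finset.sum_le_sum fun k _ => hlow k b
    rw [Finset.sum_const, hcard, nsmul_eq_mul] at h
    linarith [key a b hab]
  have hBij : B i j = -o := by
    rcases abs_choice (B i j) with h | h
    · have h1 := hup i j hij
      rw [← h, habs] at h1
      nlinarith
    · linarith
  have hkey := key i j hij
  rw [hBij] at hkey
  have hden : 2 * (d : ℝ) - n + 3 = D - c + 1 := by rw [hcR, hD]; ring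
  have he2 : 2 / (n : ℝ) ^ 2 = 2 * e ^ 2 := by rw [he]; ring
  rw [hden, he2]
  have hpos : 0 < D - c + 1 := by linarith
  by_cases hadj : G.Adj i j
  · have h : ∑ k ∈ Gᶜ.neighborFinset i, D * B k j ≤ ∑ k ∈ Gᶜ.neighborFinset i, (c * o - e) := by
      refine Finset.sum_le_sum fun k hk => hup k j ?_
      rintro rfl
      simp [hadj] at hk
    rw [Finset.sum_const, hcard, nsmul_eq_mul, ← Finset.mul_sum] at h
    have h1 : (D - c) * ((c + D) * o) ≤ (D - c) * e := by
      have : D * ∑ k ∈ Gᶜ.neighborFinset i, B k j = D * (D * o - e) := by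
        congr 1; linarith
      nlinarith
    have h2 : (c + D) * o ≤ e := le_of_mul_le_mul_left h1 (by linarith)
    have h3 : o ≤ e ^ 2 := by
      calc o = e * ((c + D) * o) := by linear_combination (-o) * hne
        _ ≤ e * e := by gcongr
        _ = e ^ 2 := by ring
    have : 0 ≤ f / (D - c + 1) := by positivity
    nlinarith [sq_nonneg e]
  · have hj : j ∈ Gᶜ.neighborFinset i := by simp [hadj, hij]
    have hc1 : (1 : ℝ) ≤ c := by
      have := Finset.card_pos.mpr ⟨j, hj⟩
      rw [hcard] at this
      exact_mod_cast this
    have h : ∑ k ∈ (Gᶜ.neighborFinset i).erase j, D * B k j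
        ≤ ∑ k ∈ (Gᶜ.neighborFinset i).erase j, (c * o - e) :=
      Finset.sum_le_sum fun k hk => hup k j (Finset.ne_of_mem_erase hk)
    have hce : (((Gᶜ.neighborFinset i).erase j).card : ℝ) = c - 1 := by
      rw [Finset.cast_card_erase_of_mem hj, hcard]
    rw [Finset.sum_const, nsmul_eq_mul, hce, ← Finset.mul_sum] at h
    rw [← Finset.sum_erase_add _ _ hj] at hkey
    have h1 : (D ^ 2 - c * (c - 1)) * o ≤ D * f + (D - c + 1) * e := by
      have h2 : D * ∑ k ∈ (Gᶜ.neighborFinset i).erase j, B k j = D * (D * o - e - B j j) := by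
        congr 1; linarith
      have h3 : D * B j j ≤ D * f := by gcongr
      nlinarith
    have hQ : 0 < D ^ 2 - c * (c - 1) := by nlinarith
    -- `D² - c(c-1) = D(D-c+1) + (c-1)(D-c)`, so the coefficient of `f` is at most `1/(D-c+1)`.
    have hfpart : D * f ≤ (D ^ 2 - c * (c - 1)) * (f / (D - c + 1)) := by
      have hq : 0 ≤ f / (D - c + 1) := by positivity
      have hfq : f = (D - c + 1) * (f / (D - c + 1)) := by field_simp
      have : 0 ≤ (c - 1) * (D - c) * (f / (D - c + 1)) :=
        mul_nonneg (mul_nonneg (by linarith) (by linarith)) hq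
      calc D * f = D * ((D - c + 1) * (f / (D - c + 1))) := by rw [← hfq]
        _ ≤ _ := by linarith
    -- With `e = 1/(c+D)` this reads `(D-c+1)(D+c) ≤ 2(D²-c(c-1))`, i.e. `D - c ≤ D² - c²`.
    have hepart : (D - c + 1) * e ≤ (D ^ 2 - c * (c - 1)) * (2 * e ^ 2) := by
      have h2 : (D - c + 1) * (c + D) ≤ 2 * (D ^ 2 - c * (c - 1)) := by nlinarith
      calc (D - c + 1) * e = (D - c + 1) * (c + D) * e ^ 2 := by
            linear_combination (-(D - c + 1) * e) * hne
        _ ≤ 2 * (D ^ 2 - c * (c - 1)) * e ^ 2 := by gcongr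
        _ = _ := by ring
    refine le_of_mul_le_mul_left ?_ hQ
    rw [mul_add]
    linarith
end

section
/- Let G be a connected strongly regular graph with parameters (n, k, a, c) which is neither the complete graph K_n nor the pentagon C₅. Then a − c ≤ (k − 5)/2. -/
/-!
Write `θ > τ` for the two eigenvalues of `G` other than `k`, so that `θ + τ = a - c` and
`θ τ = c - k`. Since `G` is connected and not complete, `c ≥ 1`, `k + 1 < n` and `a + 1 < k`.

If `a < c`, then `2 (a - c) ≤ -2`, so only `k ≤ 2` can violate the bound. The constraints above then
force the parameters `(5, 2, 0, 1)`, and the only such graph is the pentagon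
(`nonempty_iso_cycleGraph_five`).

If `a ≥ c`, put `d = θ - τ = √((a - c)² + 4 (k - c))`. The spectral projection onto the
`θ`-eigenspace has natural number trace, which shows that `d` times some integer equals
`2 k + (n - 1) (a - c)` (`exists_int_sqrt_discr_mul_eq`). The latter is positive, so `d` is rational,
hence a natural number. From `a + 1 < k` one gets `d > (a - c) + 2` (that is, `τ < -1`), and if the
bound fails then, as `c ≥ 1`, also `d < (a - c) + 4` (that is, `τ > -2`). So `d = (a - c) + 3`,
which contradicts `d ≡ a - c` modulo `2`.
-/

theorem exists_nat_trace_eq_of_mul_self {V : Type*} [Fintype V] [DecidableEq V] (E : Matrix V V ℝ)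
    (h : E * E = E) : ∃ f : ℕ, E.trace = f := by
  have h' : IsIdempotentElem (Matrix.toLin' E) := by
    unfold IsIdempotentElem
    rw [Module.End.mul_eq_comp, ← Matrix.toLin'_mul, h]
  refine ⟨Module.finrank ℝ (Matrix.toLin' E).range, ?_⟩
  rw [← Matrix.trace_toLin'_eq]
  exact (LinearMap.isProj_range_iff_isIdempotentElem _).2 h' |>.trace

/-- Integrality of the eigenvalue multiplicities: if `d` is a square root of the discriminant of
`X² - (a - c) X - (k - c)`, whose roots `(a - c ± d) / 2` are the eigenvalues other than `k`, then
`d` times an integer (the difference of the two multiplicities) is `2 k + (n - 1) (a - c)`. -/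
theorem exists_int_sqrt_discr_mul_eq {V : Type*} [Fintype V] [DecidableEq V]
    {G : SimpleGraph V} [DecidableRel G.Adj] {n k a c : ℕ}
    (h : G.IsSRGWith n k a c) (hn : 0 < n) (hp : (k : ℝ) * (k - a - 1) = (n - k - 1) * c)
    {d : ℝ} (hd : d ≠ 0) (hd2 : d ^ 2 = ((a : ℝ) - c) ^ 2 + 4 * (k - c)) :
    ∃ z : ℤ, d * z = 2 * k + (n - 1) * ((a : ℝ) - c) := by
  set A : Matrix V V ℝ := G.adjMatrix ℝ with hA
  set J : Matrix V V ℝ := Matrix.of fun _ _ => 1 with hJ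
  have hn' : (n : ℝ) ≠ 0 := by positivity
  have hAA : A * A = ((a : ℝ) - c) • A + ((k : ℝ) - c) • (1 : Matrix V V ℝ) + (c : ℝ) • J := by
    have hc : Gᶜ.adjMatrix ℝ = J - 1 - A := by
      ext i j
      by_cases hij : i = j <;> by_cases hadj : G.Adj i j <;>
        simp [hJ, hA, SimpleGraph.adjMatrix_apply, hij, hadj]
    rw [← pow_two, h.matrix_eq, hc]
    ext i j
    simp only [← hA, Matrix.add_apply, Matrix.sub_apply, Matrix.smul_apply]
    simp only [nsmul_eq_mul, smul_eq_mul]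
    ring
  have hdeg : ∀ i, (Finset.univ.filter fun x => G.Adj i x).card = k := fun i => by
    rw [← G.neighborFinset_eq_filter, G.card_neighborFinset_eq_degree, h.regular i]
  have hAJ : A * J = (k : ℝ) • J := by
    ext i j
    simp [hA, hJ, Matrix.mul_apply, SimpleGraph.adjMatrix_apply]
    exact_mod_cast hdeg i
  have hJA : J * A = (k : ℝ) • J := by
    ext i j
    simp [hA, hJ, Matrix.mul_apply, SimpleGraph.adjMatrix_apply, G.adj_comm _ j]
    exact_mod_cast hdeg j
  have hJJ : J * J = (n : ℝ) • J := by
    ext i j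
    simp [hJ, Matrix.mul_apply, h.card]
  -- `t` is the eigenvalue killed by the projection below, and `g` is chosen to kill constants.
  set t : ℝ := (((a : ℝ) - c) - d) / 2 with ht
  set g : ℝ := (k - t) / n with hg
  have hgn : g * n = k - t := by rw [hg]; field_simp
  have hgd : (c : ℝ) - g * (k - t) = - g * d := by
    rw [hg]
    field_simp
    linear_combination -hp + hd2 / 4
  obtain ⟨f, hf⟩ := exists_nat_trace_eq_of_mul_self (d⁻¹ • (A - t • 1 - g • J)) (by
    have key : (A - t • 1 - g • J) * (A - t • 1 - g • J) = d • (A - t • 1 - g • J) := by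
      simp only [mul_sub, sub_mul, smul_mul_assoc, mul_smul_comm, mul_one, one_mul, hAA, hAJ, hJA,
        hJJ]
      ext i j
      simp only [Matrix.sub_apply, Matrix.add_apply, Matrix.smul_apply, smul_eq_mul]
      linear_combination J i j * (hgd + g * hgn)
        + (1 : Matrix V V ℝ) i j * (-hd2 / 4)
    rw [smul_mul_assoc, mul_smul_comm, key, smul_smul, smul_smul]
    congr 1
    field_simp)
  have htr : (A - t • 1 - g • J).trace = - (n - 1) * t - k := by
    have hJt : J.trace = n := by simp [hJ, Matrix.trace, h.card]
    have hAt : A.trace = 0 := by simp [hA]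
    simp only [Matrix.trace_sub, Matrix.trace_smul, Matrix.trace_one, h.card, hJt, hAt, smul_eq_mul]
    linear_combination -hgn
  rw [Matrix.trace_smul, htr, smul_eq_mul] at hf
  refine ⟨n - 1 - 2 * f, ?_⟩
  have : - ((n : ℝ) - 1) * t - k = d * f := by rw [← hf]; field_simp
  push_cast
  linear_combination 2 * this

/-- The pentagon is determined by its strongly regular parameters. -/
theorem nonempty_iso_cycleGraph_five {V : Type*} [Fintype V] [DecidableEq V]
    {G : SimpleGraph V} [DecidableRel G.Adj]
    (h : G.IsSRGWith 5 2 0 1) : Nonempty (G ≃g SimpleGraph.cycleGraph 5) := by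
  have hnb : ∀ v x, G.Adj v x → ∃ y, y ≠ x ∧ ∀ u, G.Adj v u ↔ u = x ∨ u = y := by
    intro v x hx
    have h2 := h.regular v
    rw [← G.card_neighborFinset_eq_degree, Finset.card_eq_two] at h2
    obtain ⟨p, q, hpq, he⟩ := h2
    have he' : ∀ u, G.Adj v u ↔ u = p ∨ u = q := fun u => by
      rw [← G.mem_neighborFinset, he]; simp
    rcases (he' x).1 hx with rfl | rfl
    · exact ⟨q, hpq.symm, he'⟩
    · exact ⟨p, hpq, fun u => (he' u).trans or_comm⟩
  have htri : ∀ u v w, G.Adj u v → G.Adj u w → G.Adj v w → False := by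
    intro u v w h1 h2 h3
    have := h.of_adj u v h1
    rw [Fintype.card_eq_zero_iff] at this
    exact this.elim ⟨w, h2, h3⟩
  have hsq : ∀ u v, u ≠ v → ¬ G.Adj u v → ∀ w w', G.Adj u w → G.Adj v w → G.Adj u w' →
      G.Adj v w' → w = w' := by
    intro u v h1 h2 w w' a b c d
    have := h.of_not_adj h1 h2
    have := (Fintype.card_le_one_iff_subsingleton.1 this.le)
    exact congrArg Subtype.val (this.elim ⟨w, a, b⟩ ⟨w', c, d⟩)
  have hV : Nonempty V := by
    rw [← Fintype.card_pos_iff, h.card]; norm_num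
  obtain ⟨v⟩ := hV
  obtain ⟨x, hx⟩ : ∃ x, G.Adj v x := by
    rw [← G.degree_pos_iff_exists_adj, h.regular v]; norm_num
  obtain ⟨y, hyx, hv⟩ := hnb v x hx
  obtain ⟨z, hzv, hxn⟩ := hnb x v hx.symm
  obtain ⟨w, hwv, hyn⟩ := hnb y v ((hv y).2 (Or.inr rfl)).symm
  have hvy : G.Adj v y := (hv y).2 (Or.inr rfl)
  have hxz : G.Adj x z := (hxn z).2 (Or.inr rfl)
  have hyw : G.Adj y w := (hyn w).2 (Or.inr rfl)
  have hxy : ¬ G.Adj x y := fun hh => htri v x y hx hvy hh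
  have hzw : z ≠ w := by
    rintro rfl
    exact hzv (hsq x y hyx.symm hxy v z hx.symm hvy.symm hxz hyw).symm
  have n1 := hx.ne
  have n2 := hvy.ne
  have n3 := hxz.ne
  have n4 := hyw.ne
  have n5 : z ≠ y := by rintro rfl; exact hxy hxz
  have n6 : w ≠ x := by rintro rfl; exact hxy hyw.symm
  -- The cycle is `v, x, z, w, y`.
  let f : Fin 5 → V := ![v, x, z, w, y]
  have hinj : Function.Injective f := by
    intro i j hij
    fin_cases i <;> fin_cases j <;> simp [f] at hij ⊢ <;> grind
  have hbij : Function.Bijective f :=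
    (Fintype.bijective_iff_injective_and_card f).2 ⟨hinj, by simp [h.card]⟩
  have hall : ∀ u, u = v ∨ u = x ∨ u = z ∨ u = w ∨ u = y := by
    intro u
    obtain ⟨i, rfl⟩ := hbij.2 u
    fin_cases i <;> simp [f]
  obtain ⟨q, hqx, hzn⟩ := hnb z x hxz.symm
  have hzq : G.Adj z q := (hzn q).2 (Or.inr rfl)
  have hqw : q = w := by
    have := G.adj_comm z q
    have := hv z
    have := hyn z
    have := hzq.ne
    rcases hall q with rfl | rfl | rfl | rfl | rfl <;> grind
  subst hqw
  obtain ⟨r, hry, hwn⟩ := hnb q y hyw.symm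
  have hrz : r = z := by
    have := (hwn z).1 hzq.symm
    grind
  subst hrz
  refine ⟨(RelIso.mk (Equiv.ofBijective f hbij) ?_).symm⟩
  intro i j
  fin_cases i <;> fin_cases j <;>
    simp [f, hv, hxn, hyn, hzn, hwn, SimpleGraph.cycleGraph_adj] <;> grind

/-- For a connected strongly regular graph with parameters `(n, k, a, c)` which is
neither complete nor the pentagon `C₅`, one has `a - c ≤ (k - 5)/2`, i.e.
`2(a - c) ≤ k - 5` as integers. -/
theorem srg_param_diff_le_half_degree_sub_five
    {V : Type*} [Fintype V] [DecidableEq V]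
    (G : SimpleGraph V) [DecidableRel G.Adj]
    {n k a c : ℕ}
    (hsrg : G.IsSRGWith n k a c)
    (hG : G.Connected)
    (hnc : G ≠ ⊤)
    (hC5 : ¬ Nonempty (G ≃g SimpleGraph.cycleGraph 5)) :
    2 * ((a : ℤ) - c) ≤ (k : ℤ) - 5 := by
  obtain ⟨u, v, huv, hadj⟩ : ∃ u v, u ≠ v ∧ ¬ G.Adj u v := by
    by_contra! hcon
    exact hnc (top_unique fun u v h => hcon u v h)
  have hn : 0 < n := by
    rw [← hsrg.card]; exact Fintype.card_pos_iff.2 ⟨u⟩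
  have hc : 1 ≤ c := by
    by_contra! hc0
    obtain rfl : c = 0 := by lia
    -- With `c = 0` adjacency is transitive on distinct vertices, so walks collapse to edges.
    have key : ∀ x y, G.Reachable x y → x = y ∨ G.Adj x y := by
      rintro x y ⟨p⟩
      induction p with
      | nil => exact Or.inl rfl
      | @cons x y z hxy _ ih =>
        rcases ih with rfl | hyz
        · exact Or.inr hxy
        · by_contra! hxz
          have h0 := hsrg.of_not_adj hxz.1 hxz.2
          rw [Fintype.card_eq_zero_iff] at h0
          exact h0.elim ⟨y, hxy, hyz.symm⟩
    rcases key u v (hG.preconnected u v) with h | h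
    exacts [huv h, hadj h]
  have hck : c ≤ k := by
    rw [← hsrg.of_not_adj huv hadj, ← hsrg.regular u]
    exact G.card_commonNeighbors_le_degree_left u v
  have hkn : k + 1 < n := by
    have h1 : (insert u (insert v (G.neighborFinset u))).card ≤ n := by
      rw [← hsrg.card]; exact Finset.card_le_univ _
    rw [Finset.card_insert_of_notMem (by simp [huv]), Finset.card_insert_of_notMem (by simp [hadj]),
      G.card_neighborFinset_eq_degree, hsrg.regular u] at h1
    lia
  have hparam := hsrg.param_eq G hn
  have hak : a + 1 < k := by
    by_contra! hcon
    have h0 : k - a - 1 = 0 := by lia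
    rw [h0, mul_zero] at hparam
    have : 0 < (n - k - 1) * c := Nat.mul_pos (by lia) hc
    lia
  have hparamR : (k : ℝ) * (k - a - 1) = (n - k - 1) * c := by
    have h1 : ((k - a - 1 : ℕ) : ℝ) = k - a - 1 := by
      rw [Nat.sub_sub, Nat.cast_sub hak.le]; push_cast; ring
    have h2 : ((n - k - 1 : ℕ) : ℝ) = n - k - 1 := by
      rw [Nat.sub_sub, Nat.cast_sub hkn.le]; push_cast; ring
    rw [← h1, ← h2]
    exact_mod_cast hparam
  rcases lt_or_ge a c with hac | hac
  · by_contra! hlt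
    obtain rfl : k = 2 := by lia
    obtain rfl : a = 0 := by lia
    obtain rfl : c = 1 := by lia
    obtain rfl : n = 5 := by lia
    exact hC5 (nonempty_iso_cycleGraph_five hsrg)
  · by_contra! hlt
    obtain ⟨s, rfl⟩ := Nat.exists_eq_add_of_le hac
    obtain ⟨m, rfl⟩ := Nat.exists_eq_add_of_le hck
    set D : ℕ := s ^ 2 + 4 * m with hD
    have hD0 : 0 < D := by lia
    have hd : √(D : ℝ) ≠ 0 := by positivity
    obtain ⟨z, hz⟩ := exists_int_sqrt_discr_mul_eq hsrg hn hparamR hd (by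
      rw [Real.sq_sqrt (by positivity)]; simp [hD])
    have hz0 : (z : ℝ) ≠ 0 := by
      rintro h0
      rw [h0, mul_zero] at hz
      have : (1 : ℝ) ≤ n := by exact_mod_cast hn
      have : 0 ≤ ((n : ℝ) - 1) * s := by
        apply mul_nonneg <;> [linarith; positivity]
      have : (0 : ℝ) < ((c + m : ℕ) : ℝ) := by exact_mod_cast (by lia : 0 < c + m)
      push_cast at *
      nlinarith
    have hrat : ¬ Irrational √(D : ℝ) := by
      intro hirr
      refine hirr ⟨(2 * (c + m : ℕ) + (n - 1) * s) / z, ?_⟩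
      push_cast at *
      rw [div_eq_iff hz0, hz]
      ring
    have hsqD : IsSquare D := by
      by_contra hns
      exact hrat (irrational_sqrt_natCast_iff.2 hns)
    obtain ⟨r, hr⟩ := hsqD
    have h1 : s + 2 < r := by
      nlinarith
    have h2 : r < s + 4 := by
      push_cast at hlt
      have : m < 2 * s + 4 := by lia
      nlinarith
    obtain rfl : r = s + 3 := by lia
    have : 4 * m = 6 * s + 9 := by linarith
    lia
end

section
/- Let G be a connected strongly regular graph with parameters (n, k, a, c), not complete (so c ≥ 1), with Laplacian L and Moore–Penrose pseudoinverse B of L. Then every diagonal entry of B is given by B_{ii} = (k·(n − 2) − (n − 1)·(a − c))/(n²·c). -/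
/-! Write `J` for the all-ones matrix. Since `L = k I - A`, the strongly regular identity
`A² = k I + a A + c (J - I - A)` becomes a quadratic relation for `L`, and multiplying it by `J`
(with `L J = 0`) fixes its constant term: `L² = s L - c n I + c J` with `s = 2 k - a + c`.
Connectedness and non-completeness force `c ≠ 0`, so
`C = (s I - L) / (c n) - s J / (c n²)` satisfies `L C = C L = I - J / n` and `J C = 0`.
Hence `C` is a Moore–Penrose pseudoinverse of `L`, and it equals `B` by uniqueness; its diagonal
entries are `(s - k) / (c n) - s / (c n²)`. -/

open Matrix

theorem pinv_unique {V : Type*} [Fintype V] {L B C : Matrix V V ℝ}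
    (hB1 : L * B * L = L) (hB2 : B * L * B = B)
    (hB3 : (L * B)ᵀ = L * B) (hB4 : (B * L)ᵀ = B * L)
    (hC1 : L * C * L = L) (hC2 : C * L * C = C)
    (hC3 : (L * C)ᵀ = L * C) (hC4 : (C * L)ᵀ = C * L) : B = C := by
  -- `L B` and `L C` are orthogonal projections with the same range.
  have h1 : L * B = L * C := by
    have h : L * B = (L * C) * (L * B) := by rw [← Matrix.mul_assoc, hC1]
    rw [← hB3, h, Matrix.transpose_mul, hB3, hC3, ← Matrix.mul_assoc, hB1]
  have h2 : B * L = C * L := by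
    have h : B * L = (B * L) * (C * L) := by
      rw [Matrix.mul_assoc, ← Matrix.mul_assoc L, hC1]
    rw [← hB4, h, Matrix.transpose_mul, hB4, hC4, Matrix.mul_assoc, ← Matrix.mul_assoc L, hB1]
  rw [← hB2, Matrix.mul_assoc, h1, ← Matrix.mul_assoc, h2, hC2]

/-- If `c = 0`, "adjacent or equal" is transitive, so a connected graph would be complete. -/
theorem srg_c_ne_zero {V : Type*} [Fintype V] [DecidableEq V]
    {G : SimpleGraph V} [DecidableRel G.Adj] {n k a c : ℕ}
    (hsrg : G.IsSRGWith n k a c) (hG : G.Connected) (hnc : G ≠ ⊤) : c ≠ 0 := by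
  rintro rfl
  apply hnc
  have key : ∀ u v, u = v ∨ G.Adj u v := by
    intro u v
    have h := (SimpleGraph.reachable_iff_reflTransGen u v).1 (hG.preconnected u v)
    induction h with
    | refl => exact Or.inl rfl
    | @tail b w _ hbw ih =>
      rcases ih with rfl | hub
      · exact Or.inr hbw
      · by_contra! hcon
        have h0 := hsrg.of_not_adj hcon.1 hcon.2
        rw [Fintype.card_eq_zero_iff] at h0
        exact h0.elim ⟨b, hub, hbw.symm⟩
  ext u v
  rw [SimpleGraph.top_adj]
  exact ⟨fun h => h.ne, fun h => (key u v).resolve_left h⟩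

/-- The quadratic relation `L² = s L - c n I + c J`, with `s = 2 k - a + c`. -/
theorem srg_lapMatrix_sq {V : Type*} [Fintype V] [DecidableEq V]
    {G : SimpleGraph V} [DecidableRel G.Adj] {n k a c : ℕ} [Nonempty V]
    (hsrg : G.IsSRGWith n k a c)
    (hLJ : G.lapMatrix ℝ * (Matrix.of fun _ _ => 1) = 0) :
    G.lapMatrix ℝ * G.lapMatrix ℝ = (2 * k - a + c : ℝ) • G.lapMatrix ℝ
      - (c * n : ℝ) • (1 : Matrix V V ℝ) + (c : ℝ) • (Matrix.of fun _ _ => 1) := by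
  set J : Matrix V V ℝ := Matrix.of fun _ _ => 1 with hJ
  have hL : G.lapMatrix ℝ = (k : ℝ) • (1 : Matrix V V ℝ) - G.adjMatrix ℝ := by
    ext i j
    simp [SimpleGraph.lapMatrix, SimpleGraph.degMatrix, Matrix.diagonal_apply, Matrix.one_apply,
      hsrg.regular.degree_eq]
  have hA : G.adjMatrix ℝ = (k : ℝ) • (1 : Matrix V V ℝ) - G.lapMatrix ℝ := by
    rw [hL]; abel
  have hcompl : Gᶜ.adjMatrix ℝ = J - 1 - G.adjMatrix ℝ := by
    ext i j
    by_cases hij : i = j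
    · subst hij; simp [hJ]
    · by_cases h : G.Adj i j <;> simp [hJ, hij, h]
  have hsq := hsrg.matrix_eq (α := ℝ)
  rw [hcompl, hA] at hsq
  set L := G.lapMatrix ℝ
  have h1 : L * L = (2 * k - a + c : ℝ) • L
      - (c + k * k - k - (a - c) * k : ℝ) • (1 : Matrix V V ℝ) + (c : ℝ) • J := by
    simp only [pow_two, sub_mul, mul_sub, smul_mul_assoc, mul_smul_comm, one_mul, mul_one,
      ← Nat.cast_smul_eq_nsmul ℝ] at hsq
    ext i j
    have := congrFun (congrFun hsq i) j
    simp only [Matrix.sub_apply, Matrix.add_apply, Matrix.smul_apply, smul_eq_mul] at this ⊢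
    linear_combination this
  have hJJ : J * J = (n : ℝ) • J := by
    ext i j
    simp [hJ, Matrix.mul_apply, hsrg.card]
  have he : (c + k * k - k - (a - c) * k : ℝ) = c * n := by
    have h2 := congrArg (· * J) h1
    simp only [add_mul, sub_mul, smul_mul_assoc, Matrix.mul_assoc, hLJ, hJJ, one_mul,
      mul_zero, smul_zero] at h2
    obtain ⟨i⟩ := ‹Nonempty V›
    have := congrFun (congrFun h2 i) i
    simp [hJ] at this
    linarith
  rw [h1, he]

/-- For a connected, non-complete strongly regular graph with parameters `(n, k, a, c)`,
every diagonal entry of the Moore–Penrose pseudoinverse `B` of the Laplacian is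
`(k (n-2) - (n-1)(a-c)) / (n² c)`. -/
theorem srg_lapMatrix_pinv_diag_eq
    {V : Type*} [Fintype V] [DecidableEq V]
    (G : SimpleGraph V) [DecidableRel G.Adj]
    {n k a c : ℕ}
    (hsrg : G.IsSRGWith n k a c)
    (hG : G.Connected)
    (hnc : G ≠ ⊤)
    (B : Matrix V V ℝ)
    (hB1 : G.lapMatrix ℝ * B * G.lapMatrix ℝ = G.lapMatrix ℝ)
    (hB2 : B * G.lapMatrix ℝ * B = B)
    (hB3 : (G.lapMatrix ℝ * B)ᵀ = G.lapMatrix ℝ * B)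
    (hB4 : (B * G.lapMatrix ℝ)ᵀ = B * G.lapMatrix ℝ) :
    ∀ i : V, B i i =
      ((k : ℝ) * ((n : ℝ) - 2) - ((n : ℝ) - 1) * ((a : ℝ) - c)) / ((n : ℝ) ^ 2 * c) := by
  have hne : Nonempty V := hG.nonempty
  have hc : (c : ℝ) ≠ 0 := by exact_mod_cast srg_c_ne_zero hsrg hG hnc
  have hn : (n : ℝ) ≠ 0 := by
    have := Fintype.card_ne_zero (α := V)
    rw [hsrg.card] at this
    exact_mod_cast this
  have hLJ : G.lapMatrix ℝ * (Matrix.of fun _ _ => 1) = 0 := by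
    ext i j
    have := congrFun (G.lapMatrix_mulVec_const_eq_zero (R := ℝ)) i
    simpa [Matrix.mul_apply, Matrix.mulVec, dotProduct] using this
  have hsq := srg_lapMatrix_sq hsrg hLJ
  have hLii : ∀ i, G.lapMatrix ℝ i i = k := by
    intro i
    simp [SimpleGraph.lapMatrix, SimpleGraph.degMatrix, hsrg.regular.degree_eq]
  have hLT : (G.lapMatrix ℝ)ᵀ = G.lapMatrix ℝ := G.isSymm_lapMatrix (R := ℝ)
  set J : Matrix V V ℝ := Matrix.of fun _ _ => 1 with hJ
  set L := G.lapMatrix ℝ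
  have hJT : Jᵀ = J := by ext; simp [hJ]
  have hJL : J * L = 0 := by
    have := congrArg Matrix.transpose hLJ
    rwa [Matrix.transpose_mul, hLT, hJT, Matrix.transpose_zero] at this
  have hJJ : J * J = (n : ℝ) • J := by
    ext i j
    simp [hJ, Matrix.mul_apply, hsrg.card]
  set s : ℝ := 2 * k - a + c with hs
  obtain ⟨C, hC⟩ : ∃ C : Matrix V V ℝ, C = (s / (c * n)) • (1 : Matrix V V ℝ)
      - (1 / (c * n) : ℝ) • L - (s / (c * n ^ 2)) • J := ⟨_, rfl⟩
  have hLC : L * C = 1 - (1 / n : ℝ) • J := by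
    rw [hC]
    simp only [mul_sub, mul_smul_comm, mul_one, hLJ, hsq]
    ext i j
    simp only [Matrix.sub_apply, Matrix.add_apply, Matrix.smul_apply, smul_eq_mul,
      Matrix.zero_apply]
    field_simp
    ring
  have hCL : C * L = 1 - (1 / n : ℝ) • J := by
    rw [← hLC, hC]
    simp only [mul_sub, sub_mul, mul_smul_comm, smul_mul_assoc, mul_one, one_mul, hLJ, hJL]
  have hJC : J * C = 0 := by
    rw [hC]
    simp only [mul_sub, mul_smul_comm, mul_one, hJL, hJJ]
    ext i j
    simp only [Matrix.sub_apply, Matrix.smul_apply, smul_eq_mul, Matrix.zero_apply]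
    field_simp
    ring
  have hPT : (1 - (1 / n : ℝ) • J)ᵀ = 1 - (1 / n : ℝ) • J := by
    rw [Matrix.transpose_sub, Matrix.transpose_smul, hJT, Matrix.transpose_one]
  have hBC : B = C := by
    refine pinv_unique hB1 hB2 hB3 hB4 ?_ ?_ ?_ ?_
    · rw [hLC, sub_mul, smul_mul_assoc, hJL, one_mul, smul_zero, sub_zero]
    · rw [hCL, sub_mul, smul_mul_assoc, hJC, one_mul, smul_zero, sub_zero]
    · rw [hLC, hPT]
    · rw [hCL, hPT]
  intro i
  rw [hBC, hC]
  simp only [Matrix.sub_apply, Matrix.smul_apply, smul_eq_mul, Matrix.one_apply_eq, hLii, hJ,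
    Matrix.of_apply, hs]
  field_simp
  ring
end

section
/- Let G be a connected strongly regular graph with parameters (n, k, a, c), not complete and not the pentagon C₅ (so c ≥ 1 and k > 2), with Laplacian L. Suppose x : V → ℕ and d : V → ℤ satisfy L x = d, x_k₀ = 0 for some vertex k₀, |d_{k₀}| ≤ k − 1, and ∑_i |d_i| ≤ 2N for a real number N with 2N ≥ k − 1. Then s := ∑_i x_i satisfies s ≤ n·(k − 1)/(k − 2) + 2·(2N − k + 1)/c. -/
/-!
Write `A` for the adjacency matrix, `e = -d k₀ ≤ k - 1`, and `b = k - a - 1`; since `x k₀ = 0`, `e`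
is the sum of `x` over the neighbours of `k₀`. Evaluating
`A² x = k x + a A x + c (J - 1 - A) x` at `k₀` and substituting `A x = k x - d` gives
`c s = (b + c + 1) e - ∑_{j ~ k₀} d j` (`c_mul_sum`). As `d` sums to `0`, the last sum is at least
`-(N - e)` and `e ≤ N` (`partial_sum_bounds`), whence `c s ≤ (b + c) e + N`.

Connectedness and non-completeness give `c ≥ 1` and `b ≥ 1`, and `b + c ≥ 2` yields
`c s ≤ (b + c) (k - 1) + 2 (2 N - k + 1)`. Finally `n c = k b + (k + 1) c` makes
`(b + c) (k - 1)` at most `n c (k - 1) / (k - 2)` when `k > 2`.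

If `k = 2`, the parameters are those of the pentagon, which is excluded (`iso_pentagon`), or of the
quadrilateral. There `k - 2 = 0`, so the first term of the bound is `0` by the convention on
division, and the stronger inequality `s ≤ 2 N - 1` is needed; it holds by inspection of the four
values of `x` (`quadrilateral_bound`).
-/

open Matrix

namespace ChipFiringSRG

variable {V : Type*} [Fintype V] {G : SimpleGraph V} [DecidableRel G.Adj]
  {n k a c : ℕ}

lemma no_triangle (hsrg : G.IsSRGWith n k 0 c) {u v w : V} (huv : G.Adj u v)
    (huw : G.Adj u w) : ¬ G.Adj v w := by
  intro hvw
  have hcard := hsrg.of_adj u v huv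
  rw [Fintype.card_eq_zero_iff] at hcard
  exact hcard.elim ⟨w, G.mem_commonNeighbors.mpr ⟨huw, hvw⟩⟩

lemma no_square (hsrg : G.IsSRGWith n k 0 1) {u v p q : V} (huv : u ≠ v)
    (hup : G.Adj u p) (hvp : G.Adj v p) (huq : G.Adj u q) (hvq : G.Adj v q) : p = q := by
  have hcard := hsrg.of_not_adj huv (no_triangle hsrg hup.symm hvp.symm)
  obtain ⟨z, hz⟩ := Fintype.card_eq_one_iff.mp hcard
  have h1 := hz ⟨p, G.mem_commonNeighbors.mpr ⟨hup, hvp⟩⟩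
  have h2 := hz ⟨q, G.mem_commonNeighbors.mpr ⟨huq, hvq⟩⟩
  simpa using h1.trans h2.symm

variable [DecidableEq V]

/-- If `c = 0`, then being equal or adjacent is a transitive relation, so that a connected
graph is complete. -/
lemma c_pos (hsrg : G.IsSRGWith n k a c) (hG : G.Connected) (hnc : G ≠ ⊤) : 0 < c := by
  rcases Nat.eq_zero_or_pos c with h0 | h
  · exfalso
    apply hnc
    have key : ∀ u v : V, G.Walk u v → u = v ∨ G.Adj u v := by
      intro u v p
      induction p with
      | nil => exact Or.inl rfl
      | @cons u v w huv p ih =>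
        rcases ih with rfl | hvw
        · exact Or.inr huv
        · by_contra! hcon
          have hcard := hsrg.of_not_adj hcon.1 hcon.2
          rw [h0, Fintype.card_eq_zero_iff] at hcard
          exact hcard.elim ⟨v, G.mem_commonNeighbors.mpr ⟨huv, hvw.symm⟩⟩
    ext u v
    rw [SimpleGraph.top_adj]
    refine ⟨fun h => h.ne, fun h => ?_⟩
    obtain ⟨p⟩ := hG u v
    exact (key u v p).resolve_left h
  · exact h

lemma k_add_one_lt (hsrg : G.IsSRGWith n k a c) (hnc : G ≠ ⊤) : k + 1 < n := by
  by_contra! hle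
  apply hnc
  ext u v
  rw [SimpleGraph.top_adj]
  refine ⟨fun h => h.ne, fun h => ?_⟩
  by_contra hadj
  have h1 : v ∉ insert u (G.neighborFinset u) := by simp [hadj, h.symm]
  have h2 : (insert v (insert u (G.neighborFinset u))).card = k + 2 := by
    rw [Finset.card_insert_of_notMem h1, Finset.card_insert_of_notMem (by simp)]
    simp [hsrg.regular.degree_eq]
  have h3 := Finset.card_le_univ (insert v (insert u (G.neighborFinset u)))
  have := hsrg.card
  omega

lemma exists_neighbors (hreg : G.IsRegularOfDegree 2) (v : V) :
    ∃ p q, p ≠ q ∧ G.neighborFinset v = {p, q} := by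
  rw [← Finset.card_eq_two, SimpleGraph.card_neighborFinset_eq_degree]
  exact hreg v

lemma exists_other_neighbor (hreg : G.IsRegularOfDegree 2) {v p : V} (h : G.Adj v p) :
    ∃ q, q ≠ p ∧ G.neighborFinset v = {p, q} := by
  obtain ⟨r, s, hrs, hN⟩ := exists_neighbors hreg v
  have hp : p ∈ G.neighborFinset v := by simpa using h
  rw [hN, Finset.mem_insert, Finset.mem_singleton] at hp
  rcases hp with rfl | rfl
  · exact ⟨s, hrs.symm, hN⟩
  · exact ⟨r, hrs, by rw [hN, Finset.pair_comm]⟩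

/-- The pentagon is the only strongly regular graph with parameters `(5, 2, 0, 1)`. -/
lemma iso_pentagon (hsrg : G.IsSRGWith 5 2 0 1) (v : V) :
    Nonempty (G ≃g SimpleGraph.cycleGraph 5) := by
  obtain ⟨p, q, hpq, hv⟩ := exists_neighbors hsrg.regular v
  have hN : ∀ {u x y : V}, G.neighborFinset u = {x, y} → ∀ w, G.Adj u w ↔ w = x ∨ w = y := by
    intro u x y h w
    rw [← SimpleGraph.mem_neighborFinset, h, Finset.mem_insert, Finset.mem_singleton]
  have hvp : G.Adj v p := by simp [hN hv]
  have hvq : G.Adj v q := by simp [hN hv]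
  obtain ⟨p', hp'v, hp⟩ := exists_other_neighbor hsrg.regular hvp.symm
  obtain ⟨q', hq'v, hq⟩ := exists_other_neighbor hsrg.regular hvq.symm
  have hpp' : G.Adj p p' := by simp [hN hp]
  have hqq' : G.Adj q q' := by simp [hN hq]
  have hnpq : ¬ G.Adj p q := no_triangle hsrg hvp hvq
  have hp'q' : p' ≠ q' := by
    rintro rfl
    exact hp'v (no_square hsrg hpq hpp' hqq' hvp.symm hvq.symm)
  have hnvp' : ¬ G.Adj v p' := fun h => no_triangle hsrg hvp h hpp'
  have hnvq' : ¬ G.Adj v q' := fun h => no_triangle hsrg hvq h hqq'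
  have e1 := hpp'.ne
  have e2 := hqq'.ne
  have e3 := hvp.ne
  have e4 := hvq.ne
  have e5 : p' ≠ q := by rintro rfl; exact hnpq hpp'
  have e6 : q' ≠ p := by rintro rfl; exact hnpq hqq'.symm
  let f : Fin 5 → V := ![v, p, p', q', q]
  have hinj : Function.Injective f := by
    intro i j hij
    fin_cases i <;> fin_cases j <;> simp [f] at hij ⊢ <;> grind
  have hbij : Function.Bijective f :=
    (Fintype.bijective_iff_injective_and_card f).mpr ⟨hinj, by simp [hsrg.card]⟩
  -- The second neighbour of `p'` is none of `v`, `p`, `q`, hence it is `q'`.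
  have hp'q'adj : G.Adj p' q' := by
    obtain ⟨z, hzp, hz⟩ := exists_other_neighbor hsrg.regular hpp'.symm
    have hpz : G.Adj p' z := by simp [hN hz]
    obtain ⟨i, rfl⟩ := hbij.2 z
    have hqN := hN hq p'
    have hsymm := G.adj_comm p' q
    have hsymm' := G.adj_comm p' v
    have hirr := G.irrefl (v := p')
    fin_cases i <;> simp [f] at hpz hzp ⊢ <;> grind
  have a1 := hN hv
  have a2 := hN hp
  have a3 := hN hq
  have a4 := G.adj_comm
  have a5 := fun u => G.irrefl (v := u)
  refine ⟨(RelIso.mk (Equiv.ofBijective f hbij) ?_ : SimpleGraph.cycleGraph 5 ≃g G).symm⟩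
  intro i j
  rw [SimpleGraph.cycleGraph_adj]
  simp only [Equiv.ofBijective_apply]
  fin_cases i <;> fin_cases j <;> simp [f, Fin.ext_iff, Fin.sub_def] <;> grind

/-- The quadrilateral is the only graph with `k = 2` to which the theorem applies; here the bound
follows from the explicit values of the Laplacian at the four vertices. -/
lemma quadrilateral_bound (hsrg : G.IsSRGWith 4 2 0 c) (x : V → ℕ) (d : V → ℤ)
    (hd : ∀ v, d v = 2 * x v - ∑ u ∈ G.neighborFinset v, (x u : ℤ))
    (v : V) (hv : x v = 0) (hdv : |d v| ≤ 1) :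
    ∑ i, x i = 0 ∨ ((∑ i, x i : ℕ) : ℤ) + 1 ≤ ∑ i, |d i| := by
  obtain ⟨p, q, hpq, hNv⟩ := exists_neighbors hsrg.regular v
  have hvp : G.Adj v p := by rw [← SimpleGraph.mem_neighborFinset, hNv]; simp
  have hvq : G.Adj v q := by rw [← SimpleGraph.mem_neighborFinset, hNv]; simp
  have hcard3 : ({v, p, q} : Finset V).card = 3 := Finset.card_eq_three.mpr
    ⟨v, p, q, hvp.ne, hvq.ne, hpq, rfl⟩
  obtain ⟨r, hr⟩ : ∃ r, r ∉ ({v, p, q} : Finset V) := by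
    by_contra! hall
    have := Finset.eq_univ_iff_forall.mpr hall
    rw [this, Finset.card_univ, hsrg.card] at hcard3
    omega
  have huniv : (Finset.univ : Finset V) = {r, v, p, q} := by
    symm
    rw [← Finset.card_eq_iff_eq_univ, Finset.card_insert_of_notMem hr, hcard3, hsrg.card]
  -- The second neighbour of a neighbour of `v` is `r`, as there are no triangles.
  have hnbr : ∀ s t, G.Adj v s → G.Adj v t → ({r, v, p, q} : Finset V) = {r, v, s, t} →
      G.neighborFinset s = {v, r} := by
    intro s t hs ht hst
    obtain ⟨z, hzv, hz⟩ := exists_other_neighbor hsrg.regular hs.symm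
    have hsz : G.Adj s z := by rw [← SimpleGraph.mem_neighborFinset, hz]; simp
    have hmem := Finset.mem_univ z
    rw [huniv, hst] at hmem
    simp only [Finset.mem_insert, Finset.mem_singleton] at hmem
    rcases hmem with rfl | rfl | rfl | rfl
    · exact hz
    · exact absurd rfl hzv
    · exact absurd hsz G.irrefl
    · exact absurd hsz (no_triangle hsrg hs ht)
  have hNp := hnbr p q hvp hvq rfl
  have hNq := hnbr q p hvq hvp (by rw [Finset.pair_comm])
  simp only [Finset.mem_insert, Finset.mem_singleton, not_or] at hr
  have hrp : G.Adj r p := by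
    rw [SimpleGraph.adj_comm, ← SimpleGraph.mem_neighborFinset, hNp]; simp
  have hrq : G.Adj r q := by
    rw [SimpleGraph.adj_comm, ← SimpleGraph.mem_neighborFinset, hNq]; simp
  have hNr : G.neighborFinset r = {p, q} := by
    symm
    apply Finset.eq_of_subset_of_card_le
    · intro w hw
      simp only [Finset.mem_insert, Finset.mem_singleton] at hw
      rcases hw with rfl | rfl <;> simpa
    · rw [SimpleGraph.card_neighborFinset_eq_degree, hsrg.regular r, Finset.card_pair hpq]
  have hdv' := hd v
  have hdp := hd p
  have hdq := hd q
  have hdr := hd r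
  rw [hNv, Finset.sum_pair hpq] at hdv'
  rw [hNp, Finset.sum_pair (Ne.symm hr.1)] at hdp
  rw [hNq, Finset.sum_pair (Ne.symm hr.1)] at hdq
  rw [hNr, Finset.sum_pair hpq] at hdr
  have hsum : ∀ {M : Type} [AddCommMonoid M] (f : V → M),
      ∑ i, f i = f r + (f v + (f p + f q)) := by
    intro M _ f
    rw [huniv, Finset.sum_insert (by simp [hr]), Finset.sum_insert (by simp [hvp.ne, hvq.ne]),
      Finset.sum_pair hpq]
  rw [hsum, hsum]
  push_cast
  rw [abs_le] at hdv
  have := neg_abs_le (d r)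
  have := le_abs_self (d r)
  have := neg_abs_le (d v)
  have := neg_abs_le (d p)
  have := le_abs_self (d p)
  have := neg_abs_le (d q)
  have := le_abs_self (d q)
  omega

/-- The identity `A² = k + aA + c(J - 1 - A)` applied to `x` at a vertex `v` with `x v = 0`,
rewritten in terms of `d = L x`. -/
lemma c_mul_sum (hsrg : G.IsSRGWith n k a c) (x d : V → ℤ)
    (hd : ∀ v, d v = k * x v - ∑ u ∈ G.neighborFinset v, x u) (v : V) (hv : x v = 0) :
    c * ∑ i, x i = -(k - a + c) * d v - ∑ u ∈ G.neighborFinset v, d u := by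
  have h1 : (G.adjMatrix ℤ ^ 2 *ᵥ x) v =
      ∑ u ∈ G.neighborFinset v, ∑ w ∈ G.neighborFinset u, x w := by
    rw [pow_two, ← Matrix.mulVec_mulVec, SimpleGraph.adjMatrix_mulVec_apply]
    simp_rw [SimpleGraph.adjMatrix_mulVec_apply]
  have hcompl : (Gᶜ.adjMatrix ℤ *ᵥ x) v =
      ∑ i, x i - x v - ∑ u ∈ G.neighborFinset v, x u := by
    have h := G.one_add_adjMatrix_add_compl_adjMatrix_eq_of_one (α := ℤ)
    rw [SimpleGraph.compl_adjMatrix_eq_adjMatrix_compl] at h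
    have h' := congrArg (fun M => (M *ᵥ x) v) h
    simp only [Matrix.add_mulVec, Pi.add_apply, Matrix.one_mulVec,
      SimpleGraph.adjMatrix_mulVec_apply G] at h'
    have h3 : ((of 1 : Matrix V V ℤ) *ᵥ x) v = ∑ i, x i := by
      simp [Matrix.mulVec, dotProduct]
    linarith
  have h2 := hsrg.matrix_eq (α := ℤ)
  rw [h2] at h1
  simp only [Matrix.add_mulVec, Pi.add_apply, Matrix.smul_mulVec, Matrix.one_mulVec,
    Pi.smul_apply, hcompl, SimpleGraph.adjMatrix_mulVec_apply G, hv] at h1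
  simp only [nsmul_eq_mul] at h1
  have hdv := hd v
  rw [hv] at hdv
  simp_rw [hd]
  rw [Finset.sum_sub_distrib, ← Finset.mul_sum, ← h1, hv]
  ring

lemma sum_lap (d x : V → ℤ) (hLx : G.lapMatrix ℤ *ᵥ x = d) : ∑ i, d i = 0 := by
  have h : (fun _ => (1 : ℤ)) ⬝ᵥ (G.lapMatrix ℤ *ᵥ x) = 0 := by
    rw [Matrix.dotProduct_mulVec, ← Matrix.mulVec_transpose,
      (SimpleGraph.isSymm_lapMatrix (R := ℤ) (G := G)).eq,
      SimpleGraph.lapMatrix_mulVec_const_eq_zero, zero_dotProduct]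
  rw [hLx] at h
  simpa [dotProduct] using h

/-- For a vector of total `0`, every partial sum is at most half the `ℓ¹`-norm in absolute value;
here for the sums over `insert v s` and over `{v}`. -/
lemma partial_sum_bounds (d : V → ℤ) (h0 : ∑ i, d i = 0) (s : Finset V) (v : V) (hv : v ∉ s) :
    -2 * ∑ u ∈ s, d u ≤ ∑ i, |d i| + 2 * d v ∧ -2 * d v ≤ ∑ i, |d i| := by
  have split : ∀ f : V → ℤ, ∑ i, f i = f v + ∑ u ∈ s, f u + ∑ u ∈ (insert v s)ᶜ, f u := by
    intro f
    rw [← Finset.sum_insert hv, Finset.sum_add_sum_compl]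
  have e0 := split d
  have e1 := split (fun i => |d i|)
  have b1 := Finset.abs_sum_le_sum_abs d s
  have b2 := Finset.abs_sum_le_sum_abs d (insert v s)ᶜ
  have b3 := neg_abs_le (∑ u ∈ s, d u)
  have b4 := le_abs_self (∑ u ∈ s, d u)
  have b5 := le_abs_self (∑ u ∈ (insert v s)ᶜ, d u)
  have b6 := neg_abs_le (d v)
  simp only at e1
  constructor <;> linarith

end ChipFiringSRG

open ChipFiringSRG

/-- For a connected strongly regular graph `G` with parameters `(n, k, a, c)`, neither
complete nor the pentagon `C₅`, the duration `s = ∑ i, x i` of a terminating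
chip-firing game with `N` chips satisfies `s ≤ n (k-1)/(k-2) + 2(2N - k + 1)/c`. -/
theorem chipFiring_duration_srg_bound
    {V : Type*} [Fintype V] [DecidableEq V]
    (G : SimpleGraph V) [DecidableRel G.Adj]
    {n k a c : ℕ}
    (hsrg : G.IsSRGWith n k a c)
    (hG : G.Connected)
    (hnc : G ≠ ⊤)
    (hC5 : ¬ Nonempty (G ≃g SimpleGraph.cycleGraph 5))
    (x : V → ℕ) (d : V → ℤ)
    (hLx : G.lapMatrix ℤ *ᵥ (fun i => (x i : ℤ)) = d)
    (k₀ : V) (hk₀ : x k₀ = 0)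
    (hdk₀ : |d k₀| ≤ (k : ℤ) - 1)
    (N : ℝ) (hN : (∑ i, |(d i : ℝ)|) ≤ 2 * N)
    (hNk : (k : ℝ) - 1 ≤ 2 * N) :
    ((∑ i, x i : ℕ) : ℝ) ≤
      n * ((k : ℝ) - 1) / ((k : ℝ) - 2) + 2 * (2 * N - (k : ℝ) + 1) / c := by
  have hc := c_pos hsrg hG hnc
  have hn := k_add_one_lt hsrg hnc
  have hparam := hsrg.param_eq G (by omega)
  have hd : ∀ v, d v = k * (x v : ℤ) - ∑ u ∈ G.neighborFinset v, (x u : ℤ) := by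
    intro v
    rw [← hLx, SimpleGraph.lapMatrix_mulVec_apply, hsrg.regular.degree_eq]
  -- `b` is the number of neighbours of `u` other than `v` not adjacent to `v`, for `u ~ v`.
  obtain ⟨b, hb⟩ : ∃ b, b = k - a - 1 := ⟨_, rfl⟩
  have hb0 : 0 < b := by
    rcases Nat.eq_zero_or_pos b with h | h
    · rw [← hb, h, mul_zero, eq_comm, mul_eq_zero] at hparam
      omega
    · exact h
  have hkab : k = a + b + 1 := by omega
  obtain ⟨m, hm⟩ : ∃ m, n = k + 1 + m := ⟨n - k - 1, by omega⟩
  rw [← hb, show n - k - 1 = m by omega] at hparam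
  have hcR : (1 : ℝ) ≤ c := by exact_mod_cast hc
  have hbR : (1 : ℝ) ≤ b := by exact_mod_cast hb0
  rcases eq_or_ne k 2 with hk2 | hk2
  · -- `k = 2` forces `a = 0`, `b = 1` and `m * c = 2`: the pentagon or the quadrilateral.
    obtain rfl : a = 0 := by omega
    obtain rfl : b = 1 := by omega
    subst hk2
    have hc2 : c ≤ 2 := Nat.le_of_dvd (by norm_num) ⟨m, by linarith⟩
    interval_cases c
    · obtain rfl : m = 2 := by omega
      subst hm
      exact absurd (iso_pentagon hsrg k₀) hC5
    · obtain rfl : m = 1 := by omega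
      subst hm
      have hq := quadrilateral_bound hsrg x d hd k₀ hk₀ (by simpa using hdk₀)
      push_cast at hNk ⊢
      rcases hq with h0 | hq
      · have h0' : ∑ i, (x i : ℝ) = 0 := by exact_mod_cast h0
        rw [h0']
        norm_num at hNk ⊢
        linarith
      · have hq' : (∑ i, (x i : ℝ)) + 1 ≤ ∑ i, |(d i : ℝ)| := by exact_mod_cast hq
        norm_num at hNk ⊢
        linarith
  · have hk3 : 3 ≤ k := by omega
    have hk3R : (3 : ℝ) ≤ k := by exact_mod_cast hk3
    have hsum := c_mul_sum hsrg (fun i => (x i : ℤ)) d hd k₀ (by simp [hk₀])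
    obtain ⟨hS, hD⟩ := partial_sum_bounds d (sum_lap _ _ hLx) (G.neighborFinset k₀) k₀
      (by simp)
    have hsum' : (c : ℝ) * ∑ i, (x i : ℝ) =
        -(k - a + c) * (d k₀ : ℝ) - ∑ u ∈ G.neighborFinset k₀, (d u : ℝ) := by
      exact_mod_cast hsum
    have hS' : -2 * ∑ u ∈ G.neighborFinset k₀, (d u : ℝ) ≤ ∑ i, |(d i : ℝ)| + 2 * (d k₀ : ℝ) := by
      exact_mod_cast hS
    have hD' : -2 * (d k₀ : ℝ) ≤ ∑ i, |(d i : ℝ)| := by exact_mod_cast hD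
    have he : -(d k₀ : ℝ) ≤ k - 1 := by
      have := (neg_abs_le (d k₀))
      have h : -(d k₀) ≤ (k : ℤ) - 1 := by linarith
      exact_mod_cast h
    have hkabR : (k : ℝ) = a + b + 1 := by exact_mod_cast hkab
    have hparamR : (k : ℝ) * b = m * c := by exact_mod_cast hparam
    have hnR : (n : ℝ) = k + 1 + m := by exact_mod_cast hm
    -- With `e = -d k₀`, so that `e ≤ k - 1` and `e ≤ N`, the identity gives
    -- `c * s ≤ (b + c) * e + N`, and `2 ≤ b + c` absorbs the slack `2 * (k - 1 - e)`.
    have hmain : (c : ℝ) * ∑ i, (x i : ℝ) ≤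
        (b + c) * (k - 1) + 2 * (2 * N - k + 1) := by
      have hslack : 0 ≤ ((b : ℝ) + c - 2) * (k - 1 - -(d k₀ : ℝ)) :=
        mul_nonneg (by linarith) (by linarith)
      have : (k : ℝ) - a + c = b + c + 1 := by linarith
      rw [hsum', this]
      nlinarith
    have hfirst : (b + c) * ((k : ℝ) - 1) ≤ c * (n * ((k : ℝ) - 1) / ((k : ℝ) - 2)) := by
      rw [← mul_div_assoc, le_div_iff₀ (by linarith)]
      have hcn : (c : ℝ) * n = k * b + c * (k + 1) := by rw [hnR, hparamR]; ring
      rw [← mul_assoc, hcn]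
      have : 0 ≤ (2 * (b : ℝ) + 3 * c) * (k - 1) := mul_nonneg (by linarith) (by linarith)
      nlinarith
    have hcpos : (0 : ℝ) < c := by linarith
    push_cast
    refine le_of_mul_le_mul_left ?_ hcpos
    rw [mul_add, mul_div_cancel₀ _ hcpos.ne']
    linarith
end
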